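/- arXiv:1812.10819 — 5 statements merged into one kernel-verified Lean document; each statement's English description precedes it below -/
import Mathlib

section
/- Let k be a Hilbertian field, α : G → Aut(L/k) a finite embedding problem over k, and T = (T₁,…,Tₙ) a tuple of algebraically independent indeterminates (n ≥ 1). Suppose the induced embedding problem α_{k(T)} over k(T) has a solution with solution field E. Let B denote the integral closure of k[T₁,…,Tₙ] in E. Then the set of points t ∈ kⁿ for which there exists a maximal ideal P of B lying over the ideal ⟨T₁ − t₁, …, Tₙ − tₙ⟩ of k[T₁,…,Tₙ] such that the residue field E_t = B/P (which contains the image of L under the quotient map, since L ⊆ B) is the solution field of a solution to α, is Zariski-dense in kⁿ (i.e., not contained in the zero locus of any nonzero polynomial in k[T₁,…,Tₙ]). -/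
/-!
Let `K = k(T₁, …, Tₙ)` and `A = k[T₁, …, Tₙ]`, let `F` be the Galois closure of `E/K`, with group
`Γ`, and let `H ≤ Γ` be the subgroup fixing `E`. Let `C` be the integral closure of `A` in `F`. The
group `Aut(E/K)` is `N_Γ(H) / H`. Let `f ∈ A[X]` be the minimal polynomial of a primitive element
`y ∈ C` of `F/K`. Choose `t` so that `f(t, X)` is irreducible and separable, and a maximal ideal `Q`
of `C` above `t`. As `f(t, X)` is separable, the images in `C/Q` of the conjugates of `y` are
distinct; as it is irreducible, they are conjugate over `k`, and the decomposition group of `Q`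
surjects onto the automorphisms of `C/Q`. Hence `Γ` stabilizes `Q` and acts faithfully on `C/Q`.
Independence of characters provides an element of `C/Q` with nonzero trace under any given subgroup
of `Γ`, whence the invariants of `Γ` and `H` in `C/Q` are exactly `k` and `B/P`, where `P` is the
restriction of `Q` to `B`. Thus `Aut((B/P)/k)` is also `N_Γ(H) / H`.
-/

set_option synthInstance.maxHeartbeats 1000000
set_option maxHeartbeats 1000000

/-- A field `k` is *Hilbertian* if for every `n ≥ 1`, every finite collection of
polynomials `f i ∈ k[T₁,…,Tₙ][X]`, each irreducible and separable as a polynomial in `X`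
over the rational function field `k(T₁,…,Tₙ)`, and every nonzero `g ∈ k[T₁,…,Tₙ]`,
there is `t ∈ kⁿ` with `g t ≠ 0` such that each specialized polynomial `f i (t, X)` is
irreducible over `k` and separable. -/
def IsHilbertianField (k : Type) [Field k] : Prop :=
  ∀ (n : ℕ), 0 < n → ∀ (m : ℕ)
    (f : Fin m → Polynomial (MvPolynomial (Fin n) k))
    (g : MvPolynomial (Fin n) k), g ≠ 0 →
    (∀ i, Irreducible ((f i).map (algebraMap (MvPolynomial (Fin n) k)
          (FractionRing (MvPolynomial (Fin n) k)))) ∧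
        ((f i).map (algebraMap (MvPolynomial (Fin n) k)
          (FractionRing (MvPolynomial (Fin n) k)))).Separable) →
    ∃ t : Fin n → k, MvPolynomial.eval t g ≠ 0 ∧
      ∀ i, Irreducible ((f i).map (MvPolynomial.eval t)) ∧
        ((f i).map (MvPolynomial.eval t)).Separable

open Polynomial
open scoped Pointwise

section Normalizer

variable {G : Type*} [Group G] (K E F : Type*) [Field K] [Field E] [Field F]
  [Algebra K F] [Algebra E F] [MulSemiringAction G F]
  [IsGaloisGroup G K F] (H : Subgroup G) [IsGaloisGroup H E F]

include K in
theorem mem_iff_smul_algebraMap [Finite G] (γ : G) :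
    γ ∈ H ↔ ∀ x : E, γ • algebraMap E F x = algebraMap E F x := by
  rw [← IsGaloisGroup.fixingSubgroup_range_algebraMap' G K F H E, mem_fixingSubgroup_iff]
  simp only [Set.forall_mem_range]

variable [Algebra K E] [IsScalarTower K E F]

/-- Restriction `N_G(H) → Gal(E/K)` of automorphisms of `F` to the fixed field `E` of `H`. -/
noncomputable def normalizerRestrictHom : Subgroup.normalizer (H : Set G) →* Gal(E/K) :=
  haveI : IsGaloisGroup (H.subgroupOf (Subgroup.normalizer H)) E F :=
    .of_mulEquiv (Subgroup.subgroupOfEquivOfLe Subgroup.le_normalizer) fun _ _ ↦ rfl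
  letI := IsGaloisGroup.mulSemiringActionOfNormal (Subgroup.normalizer (H : Set G)) E F
    (H.subgroupOf (Subgroup.normalizer H))
  haveI : SMulDistribClass (Subgroup.normalizer (H : Set G)) E F :=
    IsGaloisGroup.smulDistribClass_smulOfNormal _ E F (H.subgroupOf (Subgroup.normalizer H))
  haveI : SMulCommClass (Subgroup.normalizer (H : Set G)) K E :=
    ⟨fun γ a x ↦ (algebraMap E F).injective <| by
      rw [algebraMap.smul', algebraMap.smul, algebraMap.smul, algebraMap.smul', smul_comm]⟩
  MulSemiringAction.toAlgAut (Subgroup.normalizer (H : Set G)) K E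

theorem algebraMap_normalizerRestrictHom (γ : Subgroup.normalizer (H : Set G)) (x : E) :
    algebraMap E F (normalizerRestrictHom K E F H γ x) = γ • algebraMap E F x :=
  haveI : IsGaloisGroup (H.subgroupOf (Subgroup.normalizer H)) E F :=
    .of_mulEquiv (Subgroup.subgroupOfEquivOfLe Subgroup.le_normalizer) fun _ _ ↦ rfl
  IsGaloisGroup.algebraMap_smulOfNormal _ E F (H.subgroupOf (Subgroup.normalizer H)) γ x

variable [Finite G]

theorem ker_normalizerRestrictHom :
    (normalizerRestrictHom K E F H).ker = H.subgroupOf (Subgroup.normalizer H) := by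
  ext γ
  rw [Subgroup.mem_subgroupOf, mem_iff_smul_algebraMap K E F H, MonoidHom.mem_ker,
    AlgEquiv.ext_iff]
  simp only [← (algebraMap E F).injective.eq_iff, algebraMap_normalizerRestrictHom,
    AlgEquiv.one_apply, Subgroup.smul_def]

theorem normalizerRestrictHom_surjective :
    Function.Surjective (normalizerRestrictHom K E F H) := by
  intro τ
  have : IsGalois K F := IsGaloisGroup.isGalois G K F
  obtain ⟨γ, hγ⟩ := (IsGaloisGroup.mulEquivAlgEquiv G K F).surjective (τ.liftNormal F)
  have hγτ (x : E) : γ • algebraMap E F x = algebraMap E F (τ x) :=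
    (DFunLike.congr_fun hγ _).trans (τ.liftNormal_commutes F x)
  have hγτ' (x : E) : γ⁻¹ • algebraMap E F x = algebraMap E F (τ.symm x) := by
    rw [inv_smul_eq_iff, hγτ, τ.apply_symm_apply]
  have hmem : γ ∈ Subgroup.normalizer (H : Set G) := by
    refine Subgroup.mem_normalizer_iff.mpr fun h ↦ ?_
    simp_rw [mem_iff_smul_algebraMap K E F H, mul_smul, hγτ', ← eq_inv_smul_iff (g := γ), hγτ']
    exact τ.symm.surjective.forall (p := fun x ↦ h • algebraMap E F x = algebraMap E F x)
  exact ⟨⟨γ, hmem⟩, AlgEquiv.ext fun x ↦ (algebraMap E F).injective <|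
    (algebraMap_normalizerRestrictHom K E F H _ x).trans (hγτ x)⟩

/-- The isomorphism `N_G(H) / H ≃ Gal(E/K)`, where `E` is the fixed field of `H`. -/
noncomputable def normalizerQuotientEquiv :
    Subgroup.normalizer (H : Set G) ⧸ H.subgroupOf (Subgroup.normalizer H) ≃* Gal(E/K) :=
  QuotientGroup.liftEquiv _ (normalizerRestrictHom_surjective K E F H)
    (ker_normalizerRestrictHom K E F H).symm

theorem algebraMap_normalizerQuotientEquiv_mk (γ : Subgroup.normalizer (H : Set G)) (x : E) :
    algebraMap E F (normalizerQuotientEquiv K E F H γ x) = γ • algebraMap E F x :=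
  algebraMap_normalizerRestrictHom K E F H γ x

end Normalizer

section ResidueAction

/-- The action on `C ⧸ Q` induced by the action of a group on `C` that stabilizes `Q`. -/
abbrev quotientAction {G C : Type*} [Group G] [CommRing C] [MulSemiringAction G C] (Q : Ideal C)
    (hQ : ∀ g : G, g • Q = Q) : MulSemiringAction G (C ⧸ Q) where
  smul g := Ideal.quotientMap Q (MulSemiringAction.toRingHom G C g)
    fun x hx ↦ (hQ g ▸ Ideal.smul_mem_pointwise_smul g x Q hx : g • x ∈ Q)
  one_smul := Ideal.Quotient.mk_surjective.forall.mpr fun x ↦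
    congrArg (Ideal.Quotient.mk Q) (one_smul G x)
  mul_smul g h := Ideal.Quotient.mk_surjective.forall.mpr fun x ↦
    congrArg (Ideal.Quotient.mk Q) (mul_smul g h x)
  smul_zero _ := map_zero _
  smul_add _ := map_add _
  smul_one _ := map_one _
  smul_mul _ := map_mul _

theorem exists_sum_smul_ne_zero (G κ : Type*) [Group G] [Fintype G] [CommRing κ] [IsDomain κ]
    [MulSemiringAction G κ] [FaithfulSMul G κ] : ∃ c : κ, ∑ g : G, g • c ≠ 0 := by
  by_contra! h
  have hinj : Function.Injective fun g : G ↦ (MulSemiringAction.toRingHom G κ g : κ →* κ) :=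
    fun g g' hgg' ↦ eq_of_smul_eq_smul fun c : κ ↦ DFunLike.congr_fun hgg' c
  have hindep := (linearIndependent_monoidHom κ κ).comp _ hinj
  refine one_ne_zero (Fintype.linearIndependent_iff.mp hindep (fun _ ↦ 1) (funext fun c ↦ ?_) 1)
  simpa using h c

theorem exists_algebraMap_eq_sum_smul (A : Type*) {G C : Type*} [Group G] [Fintype G]
    [CommRing A] [CommRing C] [Algebra A C] [MulSemiringAction G C] [Algebra.IsInvariant A C G]
    (c : C) : ∃ a : A, algebraMap A C a = ∑ g : G, g • c :=
  Algebra.IsInvariant.isInvariant (G := G) _ fun g ↦ by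
    simpa only [Finset.smul_sum, smul_smul, Equiv.coe_mulLeft] using
      Equiv.sum_comp (Equiv.mulLeft g) (· • c)

variable {G A C : Type*} [Group G] [Finite G] [CommRing A] [CommRing C] [Algebra A C]
  [MulSemiringAction G C] [Algebra.IsInvariant A C G] (p : Ideal A) [p.IsMaximal] (Q : Ideal C)
  [Q.IsPrime] [Q.LiesOver p] [MulSemiringAction G (C ⧸ Q)] [SMulDistribClass G C (C ⧸ Q)]
  [FaithfulSMul G (C ⧸ Q)]

-- Choose `c` with `∑ g, g • c ∉ Q`. If `b` is fixed modulo `Q`, then modulo `Q` it is the quotient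
-- of `∑ g, g • (b * c)` by `∑ g, g • c`, and both sums come from `A`.
theorem isInvariant_quotient : Algebra.IsInvariant (A ⧸ p) (C ⧸ Q) G := by
  cases nonempty_fintype G
  let := Ideal.Quotient.field p
  have trace_mem (c : C) : ∃ a : A ⧸ p,
      algebraMap (A ⧸ p) (C ⧸ Q) a = ∑ g : G, g • algebraMap C (C ⧸ Q) c := by
    obtain ⟨a, ha⟩ := exists_algebraMap_eq_sum_smul A (G := G) c
    refine ⟨algebraMap A (A ⧸ p) a, ?_⟩
    rw [← IsScalarTower.algebraMap_apply, IsScalarTower.algebraMap_apply A C, ha, map_sum]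
    simp only [algebraMap.smul']
  obtain ⟨c', hc⟩ := exists_sum_smul_ne_zero G (C ⧸ Q)
  obtain ⟨c, rfl⟩ := Ideal.Quotient.mk_surjective c'
  refine ⟨Ideal.Quotient.mk_surjective.forall.mpr fun b hb ↦ ?_⟩
  obtain ⟨a₁, ha₁⟩ := trace_mem c
  obtain ⟨a₂, ha₂⟩ := trace_mem (b * c)
  have ha₁_ne : a₁ ≠ 0 := by
    rintro rfl
    exact hc (ha₁.symm.trans (map_zero _))
  have hmul : algebraMap (A ⧸ p) (C ⧸ Q) a₂ = Ideal.Quotient.mk Q b * algebraMap _ _ a₁ := by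
    rw [ha₂, ha₁, Finset.mul_sum]
    simp only [map_mul, smul_mul', Ideal.Quotient.algebraMap_eq, hb]
  exact ⟨a₂ * a₁⁻¹, by
    rw [map_mul, hmul, mul_assoc, ← map_mul, mul_inv_cancel₀ ha₁_ne, map_one, mul_one]⟩

theorem isGaloisGroup_quotient [SMulCommClass G A C] : IsGaloisGroup G (A ⧸ p) (C ⧸ Q) where
  faithful := inferInstance
  commutes := ⟨fun g ↦ Ideal.Quotient.mk_surjective.forall.mpr fun a ↦
    Ideal.Quotient.mk_surjective.forall.mpr fun x ↦ by
    change g • algebraMap C (C ⧸ Q) (a • x) = Ideal.Quotient.mk p a • g • algebraMap C (C ⧸ Q) x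
    rw [← algebraMap.smul', ← algebraMap.smul', smul_comm]
    rfl⟩
  isInvariant := isInvariant_quotient p Q

end ResidueAction

theorem exists_primitive_element_isIntegral (A K F : Type*) [CommRing A] [IsDomain A] [Field K]
    [Field F] [Algebra A K] [IsFractionRing A K] [Algebra K F] [Algebra A F] [IsScalarTower A K F]
    [FiniteDimensional K F] [Algebra.IsSeparable K F] :
    ∃ y : F, IsIntegral A y ∧ IntermediateField.adjoin K {y} = ⊤ := by
  obtain ⟨x, hx⟩ := Field.exists_primitive_element K F
  have hxA : IsAlgebraic A x :=
    (IsFractionRing.isAlgebraic_iff A K F).mpr (Algebra.IsAlgebraic.isAlgebraic x)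
  obtain ⟨a, ha, hax⟩ := hxA.exists_integral_multiple
  refine ⟨a • x, hax, ?_⟩
  have hx_eq : (algebraMap A K a)⁻¹ • a • x = x := by
    rw [← algebraMap_smul K a x, inv_smul_smul₀ (by simpa using ha)]
  have hmem := IntermediateField.smul_mem _
    (IntermediateField.mem_adjoin_simple_self K (a • x)) (x := (algebraMap A K a)⁻¹)
  rw [hx_eq] at hmem
  rwa [eq_top_iff, ← hx, IntermediateField.adjoin_simple_le_iff]

theorem exists_map_eq_charpoly_and_irreducible_and_separable (G A K C F : Type*) [Group G]
    [Fintype G] [CommRing A] [IsDomain A] [Field K] [CommRing C] [Field F] [Algebra A K]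
    [IsFractionRing A K] [Algebra A C] [Algebra C F] [Algebra K F] [Algebra A F]
    [IsScalarTower A K F] [IsScalarTower A C F] [IsIntegralClosure C A F] [MulSemiringAction G C]
    [MulSemiringAction G F] [IsGaloisGroup G K F] [Algebra.IsInvariant A C G] :
    ∃ (y : C) (f : A[X]), f.map (algebraMap A C) = MulSemiringAction.charpoly G y ∧
      Irreducible (f.map (algebraMap A K)) ∧ (f.map (algebraMap A K)).Separable := by
  have : IsGalois K F := IsGaloisGroup.isGalois G K F
  have : FiniteDimensional K F := IsGaloisGroup.finiteDimensional G K F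
  have : Nontrivial C := (algebraMap C F).domain_nontrivial
  obtain ⟨y', hy', htop⟩ := exists_primitive_element_isIntegral A K F
  obtain ⟨y, rfl⟩ := (IsIntegralClosure.isIntegral_iff (A := C)).mp hy'
  obtain ⟨f, hf, hdeg, hmonic⟩ := lifts_and_natDegree_eq_and_monic
    (Algebra.IsInvariant.charpoly_mem_lifts A C G y) (MulSemiringAction.monic_charpoly G y)
  have hroot : aeval (algebraMap C F y) (f.map (algebraMap A K)) = 0 := by
    rw [aeval_map_algebraMap, aeval_algebraMap_apply, aeval_def, eval₂_eq_eval_map, hf,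
      MulSemiringAction.eval_charpoly, map_zero]
  have hdeg' : (f.map (algebraMap A K)).natDegree = (minpoly K (algebraMap C F y)).natDegree := by
    rw [(Field.primitive_element_iff_minpoly_natDegree_eq K _).mp htop, hmonic.natDegree_map, hdeg,
      ← IsGaloisGroup.card_eq_finrank G K F, MulSemiringAction.charpoly_eq,
      natDegree_finsetProd_X_sub_C_eq_card, Finset.card_univ, Nat.card_eq_fintype_card]
  have hmin : f.map (algebraMap A K) = minpoly K (algebraMap C F y) :=
    (eq_of_monic_of_dvd_of_natDegree_le (minpoly.monic (Algebra.IsIntegral.isIntegral _))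
      (hmonic.map _) (minpoly.dvd K _ hroot) hdeg'.le)
  refine ⟨y, f, hf, ?_⟩
  rw [hmin]
  exact ⟨minpoly.irreducible (Algebra.IsIntegral.isIntegral _), Algebra.IsSeparable.isSeparable K _⟩

section Stabilizer

variable {G C : Type*} [Group G] [CommRing C] [MulSemiringAction G C] (Q : Ideal C)

theorem injective_mk_smul_of_separable_map_charpoly [Fintype G] [Q.IsPrime] {y : C}
    (hsep : ((MulSemiringAction.charpoly G y).map (Ideal.Quotient.mk Q)).Separable) :
    Function.Injective fun g : G ↦ Ideal.Quotient.mk Q (g • y) := by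
  simp only [MulSemiringAction.charpoly_eq, Polynomial.map_prod, Polynomial.map_sub, map_X,
    map_C] at hsep
  exact hsep.injective_of_prod_X_sub_C

theorem faithfulSMul_quotient [MulSemiringAction G (C ⧸ Q)] [SMulDistribClass G C (C ⧸ Q)] {y : C}
    (hinj : Function.Injective fun g : G ↦ Ideal.Quotient.mk Q (g • y)) :
    FaithfulSMul G (C ⧸ Q) where
  eq_of_smul_eq_smul {g g'} h := hinj <| by
    simp only [← Ideal.Quotient.algebraMap_eq, algebraMap.smul', h]

theorem smul_eq_self_of_irreducible_of_injective_mk_smul [Fintype G] {A : Type*} [CommRing A]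
    [Algebra A C] [Algebra.IsInvariant A C G] [SMulCommClass G A C] {p : Ideal A} [p.IsMaximal]
    [Q.IsMaximal] [Q.LiesOver p] {y : C} {f : A[X]}
    (hf : f.map (algebraMap A C) = MulSemiringAction.charpoly G y)
    (hirr : Irreducible (f.map (Ideal.Quotient.mk p)))
    (hinj : Function.Injective fun g : G ↦ Ideal.Quotient.mk Q (g • y)) (g : G) : g • Q = Q := by
  let := Ideal.Quotient.field p
  let := Ideal.Quotient.field Q
  have : Normal (A ⧸ p) (C ⧸ Q) := Ideal.Quotient.normal G p Q
  have aeval_mk (h : G) :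
      aeval (algebraMap C (C ⧸ Q) (h • y)) (f.map (algebraMap A (A ⧸ p))) = 0 := by
    rw [aeval_map_algebraMap, aeval_algebraMap_apply, aeval_def, eval₂_eq_eval_map, hf,
      MulSemiringAction.charpoly_eq, eval_prod,
      Finset.prod_eq_zero (Finset.mem_univ h) (by simp), map_zero]
  have hconj : IsConjRoot (A ⧸ p) (algebraMap C (C ⧸ Q) (g • y))
      (algebraMap C (C ⧸ Q) ((1 : G) • y)) :=
    (minpoly.eq_of_irreducible hirr (aeval_mk g)).symm.trans
      (minpoly.eq_of_irreducible hirr (aeval_mk 1))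
  obtain ⟨τ, hτ⟩ := isConjRoot_iff_exists_algEquiv.mp hconj
  obtain ⟨s, rfl⟩ := Ideal.Quotient.stabilizerHom_surjective G p Q τ
  have hsg : (s : G) = g := hinj <| by
    simpa only [one_smul] using! hτ
  exact hsg ▸ s.2

end Stabilizer

section Comparison

variable {G : Type*} [Group G] [Finite G] (H : Subgroup G)
  (k e c K E F : Type*) [Field k] [Field e] [Field c] [Algebra k e] [Algebra e c] [Algebra k c]
  [IsScalarTower k e c] [MulSemiringAction G c] [IsGaloisGroup G k c] [IsGaloisGroup H e c]
  [Field K] [Field E] [Field F] [Algebra K E] [Algebra E F] [Algebra K F]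
  [IsScalarTower K E F] [MulSemiringAction G F] [IsGaloisGroup G K F] [IsGaloisGroup H E F]

/-- If `c/k` and `F/K` are Galois extensions with the same group `G`, and `e` and `E` are the fixed
fields of the same subgroup `H`, then `Gal(e/k)` and `Gal(E/K)` are both `N_G(H) / H`. -/
noncomputable def galEquivOfSubgroup : Gal(e/k) ≃* Gal(E/K) :=
  (normalizerQuotientEquiv k e c H).symm.trans (normalizerQuotientEquiv K E F H)

theorem exists_smul_eq_galEquivOfSubgroup (σ : Gal(e/k)) : ∃ γ : G,
    (∀ x : e, algebraMap e c (σ x) = γ • algebraMap e c x) ∧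
      ∀ x : E, algebraMap E F (galEquivOfSubgroup H k e c K E F σ x) = γ • algebraMap E F x := by
  obtain ⟨γ', rfl⟩ := (normalizerQuotientEquiv k e c H).surjective σ
  obtain ⟨γ, rfl⟩ := QuotientGroup.mk_surjective γ'
  refine ⟨γ, algebraMap_normalizerQuotientEquiv_mk k e c H γ, fun x ↦ ?_⟩
  rw [galEquivOfSubgroup, MulEquiv.trans_apply, MulEquiv.symm_apply_apply]
  exact algebraMap_normalizerQuotientEquiv_mk K E F H γ x

theorem apply_algebraMap_eq_of_galEquivOfSubgroup {B C : Type*} [CommRing B] [CommRing C]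
    [Algebra B C] [Algebra B E] [Algebra B F] [Algebra C F] [FaithfulSMul C F] [IsScalarTower B E F]
    [IsScalarTower B C F] [Algebra B e] [Algebra B c] [Algebra C c] [IsScalarTower B e c]
    [IsScalarTower B C c] [MulSemiringAction G C] [SMulDistribClass G C F] [SMulDistribClass G C c]
    {σ : Gal(e/k)} {b b' : B}
    (h : algebraMap B E b' = galEquivOfSubgroup H k e c K E F σ (algebraMap B E b)) :
    σ (algebraMap B e b) = algebraMap B e b' := by
  obtain ⟨γ, hγ, hγ'⟩ := exists_smul_eq_galEquivOfSubgroup H k e c K E F σ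
  have hC : algebraMap B C b' = γ • algebraMap B C b := by
    apply FaithfulSMul.algebraMap_injective C F
    rw [algebraMap.smul', ← IsScalarTower.algebraMap_apply, ← IsScalarTower.algebraMap_apply,
      IsScalarTower.algebraMap_apply B E F, IsScalarTower.algebraMap_apply B E F, h, hγ']
  apply (algebraMap e c).injective
  rw [hγ, ← IsScalarTower.algebraMap_apply, ← IsScalarTower.algebraMap_apply,
    IsScalarTower.algebraMap_apply B C c, IsScalarTower.algebraMap_apply B C c, hC,
    algebraMap.smul']

end Comparison

theorem isGaloisGroup_of_bijective_algebraMap (G R S T : Type*) [Group G] [CommRing R] [CommRing S]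
    [CommRing T] [Algebra R S] [Algebra S T] [Algebra R T] [IsScalarTower R S T]
    [MulSemiringAction G T] [IsGaloisGroup G S T] (h : Function.Bijective (algebraMap R S)) :
    IsGaloisGroup G R T :=
  .of_ringEquiv G S R T (RingEquiv.ofBijective (algebraMap R S) h).symm <| h.surjective.forall.mpr
    fun r ↦ by
      rw [← IsScalarTower.algebraMap_apply R S T]
      exact congrArg _ ((RingEquiv.ofBijective (algebraMap R S) h).symm_apply_apply r)

/-- Reduction modulo `P` induces an isomorphism of automorphism groups: the residue field `B ⧸ P`
is finite separable over `k`, and its automorphisms over `k` are identified with those of `E` over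
`K`. As an automorphism of `E` need not preserve `P`, compatibility with reduction is required only
for the relations `b' = ψ σ b` between elements of `B`, which `σ` has to satisfy modulo `P`. -/
structure ReductionInducesGalEquiv (k K E : Type*) {B : Type*} [Field k] [Field K] [Field E]
    [CommRing B] [Algebra k B] [Algebra K E] [Algebra B E] (P : Ideal B) : Prop where
  finiteDimensional : FiniteDimensional k (B ⧸ P)
  isSeparable : Algebra.IsSeparable k (B ⧸ P)
  exists_mulEquiv : ∃ ψ : Gal((B ⧸ P)/k) ≃* Gal(E/K), ∀ σ (b b' : B),
    algebraMap B E b' = ψ σ (algebraMap B E b) →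
      σ (Ideal.Quotient.mk P b) = Ideal.Quotient.mk P b'

section Reduction

variable {G : Type*} [Group G] (H : Subgroup G) (k K E F : Type*) {A B C : Type*} [Field k]
  [Field K] [Field E] [Field F] [CommRing A] [CommRing B] [CommRing C] [Algebra k A] [Algebra k B]
  [Algebra k C] [Algebra A C] [Algebra B C] [IsScalarTower k A C]
  [IsScalarTower k B C] [Algebra K E] [Algebra E F] [Algebra K F] [IsScalarTower K E F]
  [Algebra B E] [Algebra B F] [Algebra C F] [FaithfulSMul C F] [IsScalarTower B E F]
  [IsScalarTower B C F] [MulSemiringAction G F] [IsGaloisGroup G K F] [IsGaloisGroup H E F]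
  [MulSemiringAction G C] [SMulDistribClass G C F] [Algebra.IsInvariant A C G] [SMulCommClass G A C]
  [Algebra.IsInvariant B C H] [SMulCommClass H B C] (p : Ideal A) [p.IsMaximal]

include H F

theorem reductionInducesGalEquiv_of_faithfulSMul [Finite G] (P : Ideal B) [P.IsMaximal]
    (Q : Ideal C) [Q.IsMaximal] [Q.LiesOver p] [Q.LiesOver P]
    (hp : Function.Surjective (algebraMap k (A ⧸ p))) [MulSemiringAction G (C ⧸ Q)]
    [SMulDistribClass G C (C ⧸ Q)] [FaithfulSMul G (C ⧸ Q)] :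
    ReductionInducesGalEquiv k K E P := by
  let := Ideal.Quotient.field P
  let := Ideal.Quotient.field Q
  have : IsGaloisGroup G (A ⧸ p) (C ⧸ Q) := isGaloisGroup_quotient p Q
  have : IsGaloisGroup H (B ⧸ P) (C ⧸ Q) := isGaloisGroup_quotient P Q
  have : IsGaloisGroup G k (C ⧸ Q) :=
    isGaloisGroup_of_bijective_algebraMap G k (A ⧸ p) (C ⧸ Q) ⟨(algebraMap k (A ⧸ p)).injective, hp⟩
  have : IsGalois k (C ⧸ Q) := IsGaloisGroup.isGalois G k _
  have : FiniteDimensional k (C ⧸ Q) := IsGaloisGroup.finiteDimensional G k _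
  let i := IsScalarTower.toAlgHom k (B ⧸ P) (C ⧸ Q)
  exact ⟨.of_injective i.toLinearMap i.injective, .of_algHom _ _ i,
    galEquivOfSubgroup H k (B ⧸ P) (C ⧸ Q) K E F, fun σ b b' h ↦
    apply_algebraMap_eq_of_galEquivOfSubgroup H k (B ⧸ P) (C ⧸ Q) K E F (C := C) h⟩

theorem exists_isMaximal_reductionInducesGalEquiv [Fintype G] [FaithfulSMul A C]
    [Algebra A B] [IsScalarTower A B C] {y : C} {f : A[X]}
    (hf : f.map (algebraMap A C) = MulSemiringAction.charpoly G y)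
    (hp : Function.Surjective (algebraMap k (A ⧸ p)))
    (hirr : Irreducible (f.map (Ideal.Quotient.mk p)))
    (hsep : (f.map (Ideal.Quotient.mk p)).Separable) :
    ∃ P : Ideal B, P.IsMaximal ∧ P.LiesOver p ∧ ReductionInducesGalEquiv k K E P := by
  have : Algebra.IsIntegral A C := Algebra.IsInvariant.isIntegral A C G
  have : Algebra.IsIntegral B C := Algebra.IsInvariant.isIntegral B C H
  obtain ⟨Q, hQ, hQp⟩ := Ideal.exists_maximal_ideal_liesOver_of_isIntegral (S := C) p
  have hinj : Function.Injective fun g : G ↦ Ideal.Quotient.mk Q (g • y) := by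
    apply injective_mk_smul_of_separable_map_charpoly
    have hsepQ := hsep.map (f := algebraMap (A ⧸ p) (C ⧸ Q))
    rw [map_map] at hsepQ
    rw [← hf, map_map]
    exact hsepQ
  let := quotientAction Q (smul_eq_self_of_irreducible_of_injective_mk_smul Q hf hirr hinj)
  have : SMulDistribClass G C (C ⧸ Q) := ⟨fun g a ↦ Ideal.Quotient.mk_surjective.forall.mpr fun x ↦
    congrArg (Ideal.Quotient.mk Q) (smul_mul' g a x)⟩
  have := faithfulSMul_quotient Q hinj
  have : (Q.under B).IsMaximal := Ideal.isMaximal_comap_of_isIntegral_of_isMaximal Q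
  exact ⟨Q.under B, this, inferInstance,
    reductionInducesGalEquiv_of_faithfulSMul H k K E F p (Q.under B) Q hp⟩

end Reduction

section IntegralClosure

variable (k A K E : Type*) [Field k] [CommRing A] [IsDomain A] [IsIntegrallyClosed A] [Algebra k A]
  [Field K] [Algebra A K] [IsFractionRing A K] [Field E] [Algebra K E] [Algebra A E] [Algebra k E]
  [IsScalarTower A K E] [IsScalarTower k A E]

theorem exists_polynomial_reductionInducesGalEquiv_of_isGalois (F : Type*) [Field F] [Algebra K F]
    [Algebra E F] [IsScalarTower K E F] [FiniteDimensional K F] [IsGalois K F] :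
    ∃ f : A[X], Irreducible (f.map (algebraMap A K)) ∧ (f.map (algebraMap A K)).Separable ∧
      ∀ p : Ideal A, p.IsMaximal → Function.Surjective (algebraMap k (A ⧸ p)) →
        Irreducible (f.map (Ideal.Quotient.mk p)) → (f.map (Ideal.Quotient.mk p)).Separable →
        ∃ P : Ideal (integralClosure A E), P.IsMaximal ∧ P.LiesOver p ∧
          ReductionInducesGalEquiv k K E P := by
  let : Algebra A F := ((algebraMap E F).comp (algebraMap A E)).toAlgebra
  let : Algebra k F := ((algebraMap E F).comp (algebraMap k E)).toAlgebra
  have : IsScalarTower A E F := .of_algebraMap_eq' rfl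
  have : IsScalarTower A K F := .to₁₂₄ A K E F
  have : IsScalarTower k E F := .of_algebraMap_eq' rfl
  have : IsScalarTower k A F := .to₁₂₄ k A E F
  let B := integralClosure A E
  let C := integralClosure A F
  let : Algebra B C := (IsScalarTower.toAlgHom A E F).mapIntegralClosure.toAlgebra
  have : IsScalarTower A B C :=
    .of_algebraMap_eq fun a ↦ Subtype.ext (IsScalarTower.algebraMap_apply A E F a)
  have : IsScalarTower B C F := .of_algebraMap_eq' rfl
  have : IsScalarTower k B C :=
    .of_algebraMap_eq fun a ↦ Subtype.ext (IsScalarTower.algebraMap_apply k E F a)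
  have : FiniteDimensional K E := .left K E F
  have : Algebra.IsSeparable K E := Algebra.isSeparable_tower_bot_of_isSeparable K E F
  have : IsFractionRing B E := integralClosure.isFractionRing_of_finite_extension K E
  have : IsFractionRing C F := integralClosure.isFractionRing_of_finite_extension K F
  have : IsIntegrallyClosed B := integralClosure.isIntegrallyClosedOfFiniteExtension K
  let H : Subgroup Gal(F/K) := fixingSubgroup _ (Set.range (algebraMap E F))
  have : IsGaloisGroup H E F := .of_isScalarTower Gal(F/K) K F E
  have : SMulCommClass Gal(F/K) A F :=
    ⟨fun γ a x ↦ by rw [← algebraMap_smul K a x, ← algebraMap_smul K a (γ • x), smul_comm]⟩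
  have : IsGaloisGroup Gal(F/K) A C := .of_isFractionRing _ A C K F
  have : Algebra.IsIntegral B C := .tower_top A
  have : IsGaloisGroup H B C := .of_isFractionRing _ B C E F
  have : FaithfulSMul A F := .trans A K F
  have : FaithfulSMul A C := .tower_bot A C F
  cases nonempty_fintype Gal(F/K)
  obtain ⟨y, f, hf, hirr, hsep⟩ :=
    exists_map_eq_charpoly_and_irreducible_and_separable Gal(F/K) A K C F
  exact ⟨f, hirr, hsep, fun p _ ↦ exists_isMaximal_reductionInducesGalEquiv H k K E F p hf⟩

theorem exists_polynomial_reductionInducesGalEquiv [FiniteDimensional K E]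
    [Algebra.IsSeparable K E] :
    ∃ f : A[X], Irreducible (f.map (algebraMap A K)) ∧ (f.map (algebraMap A K)).Separable ∧
      ∀ p : Ideal A, p.IsMaximal → Function.Surjective (algebraMap k (A ⧸ p)) →
        Irreducible (f.map (Ideal.Quotient.mk p)) → (f.map (Ideal.Quotient.mk p)).Separable →
        ∃ P : Ideal (integralClosure A E), P.IsMaximal ∧ P.LiesOver p ∧
          ReductionInducesGalEquiv k K E P :=
  have : Algebra.IsSeparable K (SeparableClosure E) := .trans K E _
  have : IsSepClosure K (SeparableClosure E) := ⟨inferInstance, this⟩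
  exists_polynomial_reductionInducesGalEquiv_of_isGalois k A K E
    (IntermediateField.normalClosure K E (SeparableClosure E))

end IntegralClosure

section Evaluation

theorem mk_span_X_sub_C_eq_comp_eval {R σ : Type*} [CommRing R] (t : σ → R) :
    Ideal.Quotient.mk (Ideal.span (Set.range fun i ↦ MvPolynomial.X i - MvPolynomial.C (t i))) =
      (algebraMap R _).comp (MvPolynomial.eval t) :=
  MvPolynomial.ringHom_ext (fun r ↦ by rw [RingHom.comp_apply, MvPolynomial.eval_C]; rfl) fun i ↦ by
    rw [RingHom.comp_apply, MvPolynomial.eval_X]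
    exact Ideal.Quotient.eq.mpr (Ideal.subset_span ⟨i, rfl⟩)

theorem span_X_sub_C_eq_ker_eval {R σ : Type*} [CommRing R] (t : σ → R) :
    Ideal.span (Set.range fun i ↦ MvPolynomial.X i - MvPolynomial.C (t i)) =
      RingHom.ker (MvPolynomial.eval t) := by
  refine le_antisymm (Ideal.span_le.mpr ?_) fun a ha ↦ ?_
  · rintro _ ⟨i, rfl⟩
    simp
  · rw [← Ideal.Quotient.eq_zero_iff_mem, mk_span_X_sub_C_eq_comp_eval, RingHom.comp_apply,
      RingHom.mem_ker.mp ha, map_zero]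

theorem irreducible_map_of_bijective {R S : Type*} [CommRing R] [CommRing S] {φ : R →+* S}
    (hφ : Function.Bijective φ) {f : R[X]} (hf : Irreducible f) : Irreducible (f.map φ) :=
  (MulEquiv.irreducible_iff (Polynomial.mapEquiv (RingEquiv.ofBijective φ hφ))).mpr hf

end Evaluation

theorem statement_4_general {k : Type} [Field k] (hk : IsHilbertianField k) {n : ℕ} (hn : 0 < n)
    (E : Type*) [Field E] [Algebra (FractionRing (MvPolynomial (Fin n) k)) E]
    [Algebra (MvPolynomial (Fin n) k) E] [Algebra k E]
    [IsScalarTower (MvPolynomial (Fin n) k) (FractionRing (MvPolynomial (Fin n) k)) E]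
    [IsScalarTower k (MvPolynomial (Fin n) k) E]
    [FiniteDimensional (FractionRing (MvPolynomial (Fin n) k)) E]
    [Algebra.IsSeparable (FractionRing (MvPolynomial (Fin n) k)) E]
    {g : MvPolynomial (Fin n) k} (hg : g ≠ 0) :
    ∃ t : Fin n → k, MvPolynomial.eval t g ≠ 0 ∧
      ∃ P : Ideal (integralClosure (MvPolynomial (Fin n) k) E), P.IsMaximal ∧
        P.LiesOver (Ideal.span (Set.range fun i ↦ MvPolynomial.X i - MvPolynomial.C (t i))) ∧
        ReductionInducesGalEquiv k (FractionRing (MvPolynomial (Fin n) k)) E P := by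
  obtain ⟨f, hirr, hsep, hred⟩ := exists_polynomial_reductionInducesGalEquiv k
    (MvPolynomial (Fin n) k) (FractionRing (MvPolynomial (Fin n) k)) E
  obtain ⟨t, hgt, hft⟩ := hk n hn 1 (fun _ ↦ f) g hg fun _ ↦ ⟨hirr, hsep⟩
  set p := Ideal.span (Set.range fun i ↦ MvPolynomial.X i - MvPolynomial.C (t i)) with hp_def
  have hmk : Ideal.Quotient.mk p = (algebraMap k _).comp (MvPolynomial.eval t) :=
    mk_span_X_sub_C_eq_comp_eval t
  have hp : p.IsMaximal := by
    rw [hp_def, span_X_sub_C_eq_ker_eval]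
    exact RingHom.ker_isMaximal_of_surjective _ fun r ↦ ⟨_, MvPolynomial.eval_C r⟩
  have hsurj : Function.Surjective (algebraMap k (MvPolynomial (Fin n) k ⧸ p)) :=
    .of_comp (g := MvPolynomial.eval t) <| by
      rw [← RingHom.coe_comp, ← hmk]
      exact Ideal.Quotient.mk_surjective
  refine ⟨t, hgt, hred p hp hsurj ?_ ?_⟩ <;> rw [hmk, ← Polynomial.map_map]
  · exact irreducible_map_of_bijective ⟨(algebraMap k _).injective, hsurj⟩ (hft 0).1
  · exact (hft 0).2.map

/-- **Specialization of solutions over a Hilbertian field** (Proposition `lemma:0`(1)).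
Let `k` be Hilbertian and `α : G → Aut(L/k)` a finite embedding problem over `k`, with
`L` realized inside a fixed algebraic closure `Ω` of `k(T₁,…,Tₙ)`.  Suppose the induced
embedding problem `α_{k(T₁,…,Tₙ)}` has a solution `β` with solution field
`E ⊆ Ω` (so `L ⊆ E`, `E/k(T)` finite separable, and every `σ ∈ Aut(E/k(T))` restricts
on `L` to `α (β σ)`).  Let `B` be the integral closure of `k[T₁,…,Tₙ]` in `E` (the
hypothesis `hLB` records the fact that `L ⊆ B`).  Then the set of `t ∈ kⁿ` for which
there exists a maximal ideal `P` of `B` lying over `⟨T₁ − t₁, …, Tₙ − tₙ⟩` such that the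
residue field `E_t = B ⧸ P` is the solution field of a solution to `α` (via the images
of the elements of `L` under the quotient map) is Zariski-dense in `kⁿ`: it is not
contained in the zero locus of any nonzero `g ∈ k[T₁,…,Tₙ]`. -/
theorem statement_4 (k : Type) [Field k] (hk : IsHilbertianField k)
    (G : Type) [Group G] [Finite G] (n : ℕ) (hn : 0 < n)
    (L : IntermediateField k
      (AlgebraicClosure (FractionRing (MvPolynomial (Fin n) k))))
    [FiniteDimensional k L] [Algebra.IsSeparable k L]
    (α : G →* (L ≃ₐ[k] L)) (hα : Function.Surjective α)
    (E : IntermediateField (FractionRing (MvPolynomial (Fin n) k))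
      (AlgebraicClosure (FractionRing (MvPolynomial (Fin n) k))))
    [FiniteDimensional (FractionRing (MvPolynomial (Fin n) k)) E]
    [Algebra.IsSeparable (FractionRing (MvPolynomial (Fin n) k)) E]
    (hLE : (L : Set (AlgebraicClosure (FractionRing (MvPolynomial (Fin n) k))))
      ⊆ (E : Set (AlgebraicClosure (FractionRing (MvPolynomial (Fin n) k)))))
    (β : (E ≃ₐ[FractionRing (MvPolynomial (Fin n) k)] E) ≃* G)
    (hβ : ∀ (σ : E ≃ₐ[FractionRing (MvPolynomial (Fin n) k)] E)
        (x : AlgebraicClosure (FractionRing (MvPolynomial (Fin n) k))) (hx : x ∈ L),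
      ((σ ⟨x, hLE hx⟩ : E) : AlgebraicClosure (FractionRing (MvPolynomial (Fin n) k))) =
        ((α (β σ) ⟨x, hx⟩ : L) : AlgebraicClosure (FractionRing (MvPolynomial (Fin n) k))))
    (hLB : ∀ (x : AlgebraicClosure (FractionRing (MvPolynomial (Fin n) k))) (hx : x ∈ L),
      (⟨x, hLE hx⟩ : E) ∈ integralClosure (MvPolynomial (Fin n) k) E) :
    ∀ g : MvPolynomial (Fin n) k, g ≠ 0 →
      ∃ t : Fin n → k, MvPolynomial.eval t g ≠ 0 ∧
        ∃ (P : Ideal (integralClosure (MvPolynomial (Fin n) k) E)) (_ : P.IsMaximal),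
          Ideal.comap (algebraMap (MvPolynomial (Fin n) k)
              (integralClosure (MvPolynomial (Fin n) k) E)) P =
            Ideal.span (Set.range fun i => MvPolynomial.X i - MvPolynomial.C (t i)) ∧
          haveI : IsScalarTower k (MvPolynomial (Fin n) k) E :=
            ⟨fun a b c => Subtype.ext (smul_assoc a b
              (c : AlgebraicClosure (FractionRing (MvPolynomial (Fin n) k))))⟩
          FiniteDimensional k (integralClosure (MvPolynomial (Fin n) k) E ⧸ P) ∧
          Algebra.IsSeparable k (integralClosure (MvPolynomial (Fin n) k) E ⧸ P) ∧
          ∃ β' : ((integralClosure (MvPolynomial (Fin n) k) E ⧸ P) ≃ₐ[k]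
              (integralClosure (MvPolynomial (Fin n) k) E ⧸ P)) ≃* G,
            ∀ (σ : (integralClosure (MvPolynomial (Fin n) k) E ⧸ P) ≃ₐ[k]
                (integralClosure (MvPolynomial (Fin n) k) E ⧸ P))
              (x : AlgebraicClosure (FractionRing (MvPolynomial (Fin n) k))) (hx : x ∈ L),
              σ (Ideal.Quotient.mk P ⟨⟨x, hLE hx⟩, hLB x hx⟩) =
                Ideal.Quotient.mk P ⟨⟨((α (β' σ) ⟨x, hx⟩ : L)
                    : AlgebraicClosure (FractionRing (MvPolynomial (Fin n) k))),
                  hLE (α (β' σ) ⟨x, hx⟩).2⟩,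
                  hLB _ (α (β' σ) ⟨x, hx⟩).2⟩ := by
  intro g hg
  have : IsScalarTower k (MvPolynomial (Fin n) k) E :=
    ⟨fun a b c => Subtype.ext (smul_assoc a b
      (c : AlgebraicClosure (FractionRing (MvPolynomial (Fin n) k))))⟩
  obtain ⟨t, ht, P, hP, hPt, hfin, hsep, ψ, hψ⟩ := statement_4_general hk hn E hg
  exact ⟨t, ht, P, hP, hPt.over.symm, hfin, hsep, ψ.trans β, fun σ x hx ↦
    hψ σ _ _ (Subtype.ext (hβ (ψ σ) x hx).symm)⟩
end

section
/- Let k be a field and α : G → Gal(L/k) a finite Galois embedding problem over k. Suppose there exists a field extension M/k such that M and L are linearly disjoint over k and the induced embedding problem α_M has a geometric Galois solution. Then there exists an intermediate field k ⊆ k₀ ⊆ M with k₀ finitely generated as a field extension of k such that the induced embedding problem α_{k₀} has a geometric Galois solution. -/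
set_option synthInstance.maxHeartbeats 1000000
set_option maxHeartbeats 1000000

/-- `α_{F}` has a *geometric Galois solution*: there are an embedding `ι` of `L` into a
fixed algebraic closure of `F(T) = RatFunc F`, a finite Galois extension `E/F(T)` with
`L·F(T) ⊆ E` (i.e. `ι '' L ⊆ E`) such that every element of `E` algebraic over `F` lies
in the compositum `L·F` (i.e. `E ∩ F̄ = L·F`), and an isomorphism `β : Gal(E/F(T)) ≃ G`
such that every `σ ∈ Gal(E/F(T))` maps (the copy of) `L` onto itself and
`σ|_L = α (β σ)`. -/
def HasGeomGaloisSolution (k : Type) [Field k] (G : Type) [Group G]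
    (L : Type) [Field L] [Algebra k L] (α : G →* (L ≃ₐ[k] L))
    (F : Type) [Field F] [Algebra k F] : Prop :=
  letI : Algebra k (AlgebraicClosure (RatFunc F)) :=
    ((algebraMap (RatFunc F) (AlgebraicClosure (RatFunc F))).comp
      ((algebraMap F (RatFunc F)).comp (algebraMap k F))).toAlgebra
  ∃ (ι : L →ₐ[k] AlgebraicClosure (RatFunc F))
    (E : IntermediateField (RatFunc F) (AlgebraicClosure (RatFunc F)))
    (hE : ∀ x : L, ι x ∈ E),
    FiniteDimensional (RatFunc F) E ∧ IsGalois (RatFunc F) E ∧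
    (∀ z : AlgebraicClosure (RatFunc F), z ∈ E → IsAlgebraic F z →
      z ∈ IntermediateField.adjoin F (Set.range ι)) ∧
    ∃ β : (E ≃ₐ[RatFunc F] E) ≃* G,
      ∀ (σ : E ≃ₐ[RatFunc F] E) (x : L),
        ((σ ⟨ι x, hE x⟩ : E) : AlgebraicClosure (RatFunc F)) = ι (α (β σ) x)

/-!
Write the solution over `M` as `E = M(T)(θ)`. Let `k₀` be generated over `k` by the finitely many
elements of `M` needed to write down the minimal polynomial of `θ` over `M(T)` and to express its
other roots, and a basis of `L` over `k`, as polynomials in `θ`. Then `E₀ = k₀(T)(θ)` contains `L`,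
is Galois over `k₀(T)` of the same degree as `E` over `M(T)`, and restriction identifies the two
Galois groups. An element of `E₀` algebraic over `k₀` lies in `M L` because `E` is a solution over
`M`, so it is fixed by every automorphism fixing `L`. By Galois theory it lies in `k₀(T) L`, a
rational function field over `k₀ L`, whose only algebraic elements are those of `k₀ L`.
-/

open IntermediateField Polynomial

section Constants

variable {F Ω : Type*} [Field F] [Field Ω] [Algebra F Ω] {S : Set Ω} {x z : Ω}

theorem mem_range_algebraMap_of_isAlgebraic_of_mem_adjoin_simple (hx : Transcendental F x)
    (hz : z ∈ F⟮x⟯) (halg : IsAlgebraic F z) : z ∈ Set.range (algebraMap F Ω) := by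
  let e := RatFunc.algEquivOfTranscendental x hx
  have halg' : IsAlgebraic F (e.symm ⟨z, hz⟩) :=
    (isAlgebraic_algHom_iff e.symm.toAlgHom e.symm.injective).2
      ((isAlgebraic_algHom_iff F⟮x⟯.val F⟮x⟯.val.injective).1 halg)
  obtain ⟨c, hc⟩ : ∃ c, e.symm ⟨z, hz⟩ = RatFunc.C c := by
    by_contra hne
    exact RatFunc.transcendental_of_ne_C _ hne halg'
  have hzc : ⟨z, hz⟩ = algebraMap F F⟮x⟯ c := by
    rw [← e.commutes, ← e.symm_apply_eq]
    exact hc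
  exact ⟨c, congrArg Subtype.val hzc.symm⟩

theorem mem_adjoin_of_isAlgebraic_of_mem_adjoin_insert (hS : ∀ s ∈ S, IsAlgebraic F s)
    (hx : Transcendental F x) (hz : z ∈ adjoin F (insert x S)) (halg : IsAlgebraic F z) :
    z ∈ adjoin F S := by
  have := isAlgebraic_adjoin fun s hs => (hS s hs).isIntegral
  have hz' : z ∈ (adjoin F S)⟮x⟯ := by
    rwa [← mem_restrictScalars F, adjoin_adjoin_left, Set.union_singleton]
  obtain ⟨c, rfl⟩ := mem_range_algebraMap_of_isAlgebraic_of_mem_adjoin_simple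
    (hx.extendScalars (adjoin F S)) hz' (halg.extendScalars (algebraMap F _).injective)
  exact c.2

variable [Algebra (RatFunc F) Ω] [IsScalarTower F (RatFunc F) Ω]

theorem mem_adjoin_insert_of_mem_adjoin_ratFunc (hz : z ∈ adjoin (RatFunc F) S) :
    z ∈ adjoin F (insert (algebraMap (RatFunc F) Ω RatFunc.X) S) := by
  let T : Ω := algebraMap (RatFunc F) Ω RatFunc.X
  have hrange (r : RatFunc F) : algebraMap (RatFunc F) Ω r ∈ F⟮T⟯ := by
    have hr : r ∈ F⟮(RatFunc.X : RatFunc F)⟯ := RatFunc.adjoin_X (K := F) ▸ mem_top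
    have hmap : algebraMap (RatFunc F) Ω r ∈
        F⟮(RatFunc.X : RatFunc F)⟯.map (IsScalarTower.toAlgHom F (RatFunc F) Ω) := ⟨r, hr, rfl⟩
    rwa [adjoin_map, Set.image_singleton] at hmap
  induction hz using adjoin_induction with
  | mem s hs => exact subset_adjoin F _ (Set.mem_insert_of_mem T hs)
  | algebraMap r =>
    exact adjoin.mono F _ _ (Set.singleton_subset_iff.2 (Set.mem_insert T S)) (hrange r)
  | add _ _ _ _ hu hv => exact add_mem hu hv
  | inv _ _ hu => exact inv_mem hu
  | mul _ _ _ _ hu hv => exact mul_mem hu hv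

theorem mem_adjoin_of_isAlgebraic_of_mem_adjoin_ratFunc (hS : ∀ s ∈ S, IsAlgebraic F s)
    (hz : z ∈ adjoin (RatFunc F) S) (halg : IsAlgebraic F z) : z ∈ adjoin F S :=
  mem_adjoin_of_isAlgebraic_of_mem_adjoin_insert hS
    ((transcendental_algebraMap_iff (algebraMap (RatFunc F) Ω).injective).2
      RatFunc.transcendental_X)
    (mem_adjoin_insert_of_mem_adjoin_ratFunc hz) halg

end Constants

section Descent

variable {K₀ K E : Type*} [Field K₀] [Field K] [Field E] [Algebra K₀ K] [Algebra K E]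
  [Algebra K₀ E] [IsScalarTower K₀ K E] {θ : E}

theorem map_minpoly_of_mem_lifts (hint : IsIntegral K θ)
    (hlift : minpoly K θ ∈ lifts (algebraMap K₀ K)) :
    (minpoly K₀ θ).map (algebraMap K₀ K) = minpoly K θ := by
  obtain ⟨f, hf⟩ := (mem_lifts _).1 hlift
  have hmonic : f.Monic := monic_of_injective (algebraMap K₀ K).injective
    (hf ▸ minpoly.monic hint)
  have hirr : Irreducible f := hmonic.irreducible_of_irreducible_map (algebraMap K₀ K) f
    (hf ▸ minpoly.irreducible hint)
  have hroot : aeval θ f = 0 := by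
    rw [← aeval_map_algebraMap K, hf, minpoly.aeval]
  rw [← minpoly.eq_of_irreducible_of_monic hirr hroot hmonic, hf]

theorem isIntegral_of_minpoly_mem_lifts (hint : IsIntegral K θ)
    (hlift : minpoly K θ ∈ lifts (algebraMap K₀ K)) : IsIntegral K₀ θ := by
  apply minpoly.ne_zero_iff.1
  rw [← Polynomial.map_ne_zero_iff (algebraMap K₀ K).injective, map_minpoly_of_mem_lifts hint hlift]
  exact minpoly.ne_zero hint

theorem aeval_mem_adjoin_simple_of_mem_lifts {p : K[X]} (hp : p ∈ lifts (algebraMap K₀ K)) :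
    aeval θ p ∈ K₀⟮θ⟯ := by
  obtain ⟨q, rfl⟩ := (mem_lifts _).1 hp
  rw [aeval_map_algebraMap]
  exact algebra_adjoin_le_adjoin K₀ _ (aeval_mem_adjoin_singleton K₀ θ)

theorem isGalois_adjoin_simple_of_minpoly_mem_lifts [IsGalois K E]
    (hlift : minpoly K θ ∈ lifts (algebraMap K₀ K))
    (hroots : (minpoly K θ).rootSet E ⊆ K₀⟮θ⟯) : IsGalois K₀ K₀⟮θ⟯ := by
  have hmap := map_minpoly_of_mem_lifts (IsGalois.integral K θ) hlift
  have hsep : (minpoly K₀ θ).Separable := by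
    rw [← separable_map (algebraMap K₀ K), hmap]
    exact IsGalois.separable K θ
  have hroots₀ : (minpoly K₀ θ).rootSet E = (minpoly K θ).rootSet E := by
    simp only [rootSet, aroots, ← hmap, Polynomial.map_map, IsScalarTower.algebraMap_eq K₀ K E]
  have hsplits : ((minpoly K₀ θ).map (algebraMap K₀ E)).Splits := by
    rw [IsScalarTower.algebraMap_eq K₀ K E, ← Polynomial.map_map, hmap]
    exact IsGalois.splits K θ
  have hθ : θ ∈ (minpoly K₀ θ).rootSet E :=
    mem_rootSet.2 ⟨hsep.ne_zero, minpoly.aeval K₀ θ⟩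
  have : (minpoly K₀ θ).IsSplittingField K₀ K₀⟮θ⟯ := isSplittingField_iff.2
    ⟨splits_of_splits hsplits (hroots₀ ▸ hroots),
      le_antisymm (adjoin.mono _ _ _ (Set.singleton_subset_iff.2 hθ))
        (adjoin_le_iff.2 (hroots₀ ▸ hroots))⟩
  exact IsGalois.of_separable_splitting_field hsep

theorem finrank_adjoin_simple_of_minpoly_mem_lifts [FiniteDimensional K E]
    (hθ : K⟮θ⟯ = ⊤) (hlift : minpoly K θ ∈ lifts (algebraMap K₀ K)) :
    Module.finrank K₀ K₀⟮θ⟯ = Module.finrank K E := by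
  have hint : IsIntegral K θ := .of_finite K θ
  rw [adjoin.finrank (isIntegral_of_minpoly_mem_lifts hint hlift),
    ← (Field.primitive_element_iff_minpoly_natDegree_eq K θ).1 hθ,
    ← map_minpoly_of_mem_lifts hint hlift, natDegree_map]

theorem eqOn_adjoin_of_eqOn {S : Set E} {σ τ : Gal(E/K)} (h : Set.EqOn σ τ S) :
    Set.EqOn σ τ (adjoin K S) := fun z hz =>
  DFunLike.congr_fun (algHom_ext_of_eq_adjoin K rfl
    (φ₁ := (σ : E →ₐ[K] E).comp (adjoin K S).val)
    (φ₂ := (τ : E →ₐ[K] E).comp (adjoin K S).val) h) ⟨z, hz⟩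

theorem coe_restrictRestrictAlgEquivMapHom (E₀ : IntermediateField K₀ E) [Normal K₀ E₀]
    (σ : Gal(E/K)) (x : E₀) : (restrictRestrictAlgEquivMapHom K₀ E₀ K E σ x : E) = σ x := by
  simp [restrictRestrictAlgEquivMapHom, AlgEquiv.restrictNormalHom_apply]

theorem bijective_restrictRestrictAlgEquivMapHom_adjoin_simple [FiniteDimensional K E]
    [IsGalois K E] [IsGalois K₀ K₀⟮θ⟯] (hθ : K⟮θ⟯ = ⊤)
    (hlift : minpoly K θ ∈ lifts (algebraMap K₀ K)) :
    Function.Bijective (restrictRestrictAlgEquivMapHom K₀ K₀⟮θ⟯ K E) := by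
  have := adjoin.finiteDimensional (isIntegral_of_minpoly_mem_lifts (.of_finite K θ) hlift)
  refine (Nat.bijective_iff_injective_and_card _).2 ⟨fun σ τ hστ => ?_, ?_⟩
  · have hθ' : σ θ = τ θ := by
      have hgen := congrArg (fun ρ : Gal(K₀⟮θ⟯/K₀) => (ρ (AdjoinSimple.gen K₀ θ) : E)) hστ
      simpa only [coe_restrictRestrictAlgEquivMapHom, AdjoinSimple.coe_gen] using hgen
    have heq : Set.EqOn σ τ K⟮θ⟯ := eqOn_adjoin_of_eqOn (Set.eqOn_singleton.2 hθ')
    ext x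
    exact heq (hθ ▸ mem_top)
  · rw [IsGalois.card_aut_eq_finrank, IsGalois.card_aut_eq_finrank,
      finrank_adjoin_simple_of_minpoly_mem_lifts hθ hlift]

theorem mem_adjoin_of_coe_mem_adjoin {E₀ : IntermediateField K₀ E} [FiniteDimensional K₀ E₀]
    [IsGalois K₀ E₀]
    (hsurj : Function.Surjective (restrictRestrictAlgEquivMapHom K₀ E₀ K E)) {S : Set E₀} {z : E₀}
    (hz : (z : E) ∈ adjoin K ((↑) '' S : Set E)) : z ∈ adjoin K₀ S := by
  rw [← IsGalois.fixedField_fixingSubgroup (adjoin K₀ S), mem_fixedField_iff]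
  intro τ hτ
  obtain ⟨σ, rfl⟩ := hsurj τ
  have hS : Set.EqOn σ (1 : Gal(E/K)) ((↑) '' S : Set E) := by
    rintro _ ⟨s, hs, rfl⟩
    rw [← coe_restrictRestrictAlgEquivMapHom,
      (mem_fixingSubgroup_iff _ _).1 hτ s (subset_adjoin _ _ hs)]
    rfl
  apply Subtype.ext
  rw [coe_restrictRestrictAlgEquivMapHom]
  exact eqOn_adjoin_of_eqOn hS hz

end Descent

section Coefficients

/-- The embedding `F(T) → M(T)` induced by a field embedding `φ : F → M`. -/
noncomputable def ratFuncMap {F M : Type*} [Field F] [Field M] (φ : F →+* M) :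
    RatFunc F →+* RatFunc M :=
  IsFractionRing.map (j := mapRingHom φ) (map_injective φ φ.injective)

variable {F M : Type*} [Field F] [Field M]

theorem ratFuncMap_algebraMap (φ : F →+* M) (p : F[X]) :
    ratFuncMap φ (algebraMap F[X] (RatFunc F) p) = algebraMap M[X] (RatFunc M) (p.map φ) :=
  IsLocalization.map_eq
    (nonZeroDivisors_le_comap_nonZeroDivisors_of_injective _ (map_injective φ φ.injective)) p

theorem ratFuncMap_C (φ : F →+* M) (a : F) : ratFuncMap φ (RatFunc.C a) = RatFunc.C (φ a) := by
  rw [← RatFunc.algebraMap_C, ratFuncMap_algebraMap, map_C, RatFunc.algebraMap_C]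

theorem mem_range_ratFuncMap {φ : F →+* M} {r : RatFunc M} (hnum : r.num ∈ lifts φ)
    (hdenom : r.denom ∈ lifts φ) : r ∈ Set.range (ratFuncMap φ) := by
  obtain ⟨p, hp⟩ := (mem_lifts _).1 hnum
  obtain ⟨q, hq⟩ := (mem_lifts _).1 hdenom
  refine ⟨algebraMap _ _ p / algebraMap _ _ q, ?_⟩
  rw [map_div₀, ratFuncMap_algebraMap, ratFuncMap_algebraMap, hp, hq, RatFunc.num_div_denom]

variable {k : Type*} [Field k] [Algebra k M]

theorem exists_fg_subset_range_ratFuncMap {S : Set (RatFunc M)} (hS : S.Finite) :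
    ∃ k₀ : IntermediateField k M, k₀.FG ∧ S ⊆ Set.range (ratFuncMap (algebraMap k₀ M)) := by
  let A : Set M := ⋃ r ∈ S, r.num.coeffs ∪ r.denom.coeffs
  have hA : A.Finite := hS.biUnion fun r _ => (Finset.finite_toSet _).union (Finset.finite_toSet _)
  have hlifts (p : M[X]) (hp : (p.coeffs : Set M) ⊆ A) :
      p ∈ lifts (algebraMap (adjoin k A) M) := by
    rw [lifts_iff_coeffs_subset_range]
    exact fun a ha => ⟨⟨a, subset_adjoin k A (hp ha)⟩, rfl⟩
  refine ⟨adjoin k A, fg_adjoin_of_finite hA, fun r hr => mem_range_ratFuncMap ?_ ?_⟩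
  · exact hlifts _ fun a ha => Set.mem_biUnion hr (.inl ha)
  · exact hlifts _ fun a ha => Set.mem_biUnion hr (.inr ha)

theorem exists_fg_subset_lifts_ratFuncMap {P : Set (RatFunc M)[X]} (hP : P.Finite) :
    ∃ k₀ : IntermediateField k M,
      k₀.FG ∧ ∀ p ∈ P, p ∈ lifts (ratFuncMap (algebraMap k₀ M)) := by
  obtain ⟨k₀, hfg, hk₀⟩ := exists_fg_subset_range_ratFuncMap (k := k)
    (hP.biUnion fun p _ => p.coeffs.finite_toSet)
  exact ⟨k₀, hfg, fun p hp => (lifts_iff_coeffs_subset_range p).2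
    ((Set.subset_biUnion_of_mem hp).trans hk₀)⟩

theorem exists_fg_lifts_of_adjoin_simple_eq_top {E : Type*} [Field E]
    [Algebra (RatFunc M) E] [FiniteDimensional (RatFunc M) E] {θ : E}
    (hθ : (RatFunc M)⟮θ⟯ = ⊤) {A : Set E} (hA : A.Finite) :
    ∃ k₀ : IntermediateField k M, k₀.FG ∧
      minpoly (RatFunc M) θ ∈ lifts (ratFuncMap (algebraMap k₀ M)) ∧
      ∀ a ∈ A, ∃ p ∈ lifts (ratFuncMap (algebraMap k₀ M)), aeval θ p = a := by
  have hpoly (a : E) : ∃ p : (RatFunc M)[X], aeval θ p = a := by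
    have ha : a ∈ (RatFunc M)⟮θ⟯.toSubalgebra := hθ ▸ mem_top (x := a)
    rwa [adjoin_simple_toSubalgebra_of_isAlgebraic (.of_finite _ θ),
      Algebra.adjoin_singleton_eq_range_aeval] at ha
  choose p hp using hpoly
  obtain ⟨k₀, hfg, hk₀⟩ := exists_fg_subset_lifts_ratFuncMap (k := k)
    ((hA.image p).insert (minpoly (RatFunc M) θ))
  exact ⟨k₀, hfg, hk₀ _ (Set.mem_insert _ _),
    fun a ha => ⟨p a, hk₀ _ (.inr ⟨a, ha, rfl⟩), hp a⟩⟩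

end Coefficients

section GeometricSolutions

instance isScalarTower_intermediateField {k F K E : Type*} [Field k] [Field F] [Field K]
    [Field E] [Algebra k F] [Algebra k K] [Algebra F K] [Algebra k E] [Algebra F E] [Algebra K E]
    [IsScalarTower k K E] [IsScalarTower F K E] [IsScalarTower k F E]
    (E₀ : IntermediateField K E) : IsScalarTower k F E₀ :=
  .of_algebraMap_eq fun x => Subtype.ext (IsScalarTower.algebraMap_apply k F E x)

/-- A geometric Galois solution `(E, ι, β)` of the embedding problem `α` over `F`, with `E` an
arbitrary extension of `F(T)` instead of a subfield of a fixed algebraic closure. -/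
structure IsGeomGaloisSolution {k G L F E : Type*} [Field k] [Group G] [Field L] [Algebra k L]
    [Field F] [Field E] [Algebra k E] [Algebra F E] [Algebra (RatFunc F) E]
    (α : G →* Gal(L/k)) (ι : L →ₐ[k] E) (β : Gal(E/RatFunc F) ≃* G) : Prop where
  finiteDimensional : FiniteDimensional (RatFunc F) E
  isGalois : IsGalois (RatFunc F) E
  mem_adjoin_of_isAlgebraic : ∀ z : E, IsAlgebraic F z → z ∈ adjoin F (Set.range ι)
  apply_eq : ∀ (σ : Gal(E/RatFunc F)) (x : L), σ (ι x) = ι (α (β σ) x)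

theorem HasGeomGaloisSolution.exists_isGeomGaloisSolution {k G L F : Type} [Field k] [Group G]
    [Field L] [Algebra k L] [Field F] [Algebra k F] {α : G →* Gal(L/k)}
    (h : HasGeomGaloisSolution k G L α F) :
    ∃ (E : IntermediateField (RatFunc F) (AlgebraicClosure (RatFunc F))) (ι : L →ₐ[k] E)
      (β : Gal(E/RatFunc F) ≃* G), IsGeomGaloisSolution (F := F) α ι β := by
  obtain ⟨ι, E, hE, hfin, hgal, hconst, β, hβ⟩ := h
  let ι' : L →ₐ[k] E :=
    { toRingHom := (ι : L →+* AlgebraicClosure (RatFunc F)).codRestrict E.toSubfield hE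
      commutes' x := by
        let : Algebra k (AlgebraicClosure (RatFunc F)) :=
          ((algebraMap (RatFunc F) (AlgebraicClosure (RatFunc F))).comp
            ((algebraMap F (RatFunc F)).comp (algebraMap k F))).toAlgebra
        exact Subtype.ext (ι.commutes x) }
  refine ⟨E, ι', β, hfin, hgal, fun z hz => ?_, fun σ x => Subtype.ext (hβ σ x)⟩
  have hz' : (z : AlgebraicClosure (RatFunc F)) ∈ adjoin F (Set.range ι) :=
    hconst z z.2 (hz.algHom (E.val.restrictScalars F))
  have hrange : Set.range ι = E.val.restrictScalars F '' Set.range ι' := by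
    rw [← Set.range_comp]
    rfl
  rw [hrange, ← adjoin_map] at hz'
  obtain ⟨y, hy, hyz⟩ := hz'
  rwa [← E.val.injective hyz]

theorem IsGeomGaloisSolution.hasGeomGaloisSolution {k G L F E : Type} [Field k] [Group G]
    [Field L] [Algebra k L] [Field F] [Algebra k F] [Field E] [Algebra k E] [Algebra F E]
    [Algebra (RatFunc F) E] [IsScalarTower k F E] [IsScalarTower F (RatFunc F) E]
    {α : G →* Gal(L/k)} {ι : L →ₐ[k] E} {β : Gal(E/RatFunc F) ≃* G}
    (h : IsGeomGaloisSolution (F := F) α ι β) : HasGeomGaloisSolution k G L α F := by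
  have := h.finiteDimensional
  have := h.isGalois
  let j : E →ₐ[RatFunc F] AlgebraicClosure (RatFunc F) := IsAlgClosed.lift
  let e : E ≃ₐ[RatFunc F] j.fieldRange := AlgEquiv.ofInjectiveField j
  let : Algebra k (AlgebraicClosure (RatFunc F)) :=
    ((algebraMap (RatFunc F) (AlgebraicClosure (RatFunc F))).comp
      ((algebraMap F (RatFunc F)).comp (algebraMap k F))).toAlgebra
  let ι' : L →ₐ[k] AlgebraicClosure (RatFunc F) :=
    { toRingHom := (j : E →+* AlgebraicClosure (RatFunc F)).comp ι
      commutes' x := by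
        change j (ι (algebraMap k L x)) = _
        rw [ι.commutes, IsScalarTower.algebraMap_apply k F E,
          IsScalarTower.algebraMap_apply F (RatFunc F) E, j.commutes]
        rfl }
  refine ⟨ι', j.fieldRange, fun x => ⟨ι x, rfl⟩, e.toLinearEquiv.finiteDimensional,
    IsGalois.of_algEquiv e, ?_, (AlgEquiv.autCongr e.symm).trans β, fun σ x => ?_⟩
  · rintro _ ⟨z, rfl⟩ hz
    have hz' : j.restrictScalars F z ∈ (adjoin F (Set.range ι)).map (j.restrictScalars F) :=
      ⟨z, h.mem_adjoin_of_isAlgebraic z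
        ((isAlgebraic_algHom_iff (j.restrictScalars F) j.injective).1 hz), rfl⟩
    rwa [adjoin_map, ← Set.range_comp] at hz'
  · have happly := h.apply_eq (AlgEquiv.autCongr e.symm σ) x
    change _ = j (ι (α (β (AlgEquiv.autCongr e.symm σ)) x))
    rw [← happly]
    change _ = (e (e.symm (σ (e (ι x)))) : AlgebraicClosure (RatFunc F))
    rw [e.apply_symm_apply]
    rfl

theorem IsGeomGaloisSolution.exists_restrict {k G L F M E : Type*} [Field k] [Group G] [Field L]
    [Algebra k L] [Algebra.IsAlgebraic k L] [Field F] [Algebra k F] [Field M] [Algebra F M]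
    [Field E] [Algebra k E] [Algebra F E] [Algebra M E] [IsScalarTower k F E] [IsScalarTower F M E]
    [Algebra (RatFunc F) E] [IsScalarTower k (RatFunc F) E] [IsScalarTower F (RatFunc F) E]
    [Algebra (RatFunc M) E] [IsScalarTower M (RatFunc M) E]
    [Algebra (RatFunc F) (RatFunc M)] [IsScalarTower (RatFunc F) (RatFunc M) E]
    {α : G →* Gal(L/k)} {ι : L →ₐ[k] E} {β : Gal(E/RatFunc M) ≃* G}
    (h : IsGeomGaloisSolution (F := M) α ι β) {E₀ : IntermediateField (RatFunc F) E}
    [FiniteDimensional (RatFunc F) E₀] [IsGalois (RatFunc F) E₀] (hι : ∀ x, ι x ∈ E₀)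
    (hbij : Function.Bijective (restrictRestrictAlgEquivMapHom (RatFunc F) E₀ (RatFunc M) E)) :
    ∃ (ι₀ : L →ₐ[k] E₀) (β₀ : Gal(E₀/RatFunc F) ≃* G),
      IsGeomGaloisSolution (F := F) α ι₀ β₀ := by
  let ι₀ : L →ₐ[k] E₀ := ι.codRestrict (E₀.toSubalgebra.restrictScalars k) hι
  let res := MulEquiv.ofBijective _ hbij
  refine ⟨ι₀, res.symm.trans β, inferInstance, inferInstance, fun z hz => ?_, fun τ x => ?_⟩
  · have hzM : (z : E) ∈ adjoin M (Set.range ι) :=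
      h.mem_adjoin_of_isAlgebraic z ((hz.algHom (E₀.val.restrictScalars F)).tower_top M)
    have hle : adjoin M (Set.range ι) ≤ (adjoin (RatFunc M) (Set.range ι)).restrictScalars M :=
      adjoin_le_iff.2 (subset_adjoin (RatFunc M) _)
    have hrange : ((↑) '' Set.range ι₀ : Set E) = Set.range ι := (Set.range_comp _ ι₀).symm
    have hzMT : (z : E) ∈ adjoin (RatFunc M) ((↑) '' Set.range ι₀ : Set E) := by
      rw [hrange]
      exact hle hzM
    have hzFT : z ∈ adjoin (RatFunc F) (Set.range ι₀) :=
      mem_adjoin_of_coe_mem_adjoin hbij.surjective hzMT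
    refine mem_adjoin_of_isAlgebraic_of_mem_adjoin_ratFunc ?_ hzFT hz
    rintro _ ⟨x, rfl⟩
    exact ((Algebra.IsAlgebraic.isAlgebraic x).algHom ι₀).tower_top F
  · obtain ⟨σ, rfl⟩ := res.surjective τ
    apply Subtype.ext
    rw [MulEquiv.trans_apply, MulEquiv.symm_apply_apply]
    exact (coe_restrictRestrictAlgEquivMapHom E₀ σ (ι₀ x)).trans (h.apply_eq σ x)

theorem IsGeomGaloisSolution.exists_fg_hasGeomGaloisSolution {k G L M E : Type} [Field k] [Group G]
    [Field L] [Algebra k L] [FiniteDimensional k L] [Field M] [Algebra k M] [Field E]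
    [Algebra k E] [Algebra M E] [IsScalarTower k M E] [Algebra (RatFunc M) E]
    [IsScalarTower M (RatFunc M) E]
    {α : G →* Gal(L/k)} {ι : L →ₐ[k] E} {β : Gal(E/RatFunc M) ≃* G}
    (h : IsGeomGaloisSolution (F := M) α ι β) :
    ∃ k₀ : IntermediateField k M, k₀.FG ∧ HasGeomGaloisSolution k G L α k₀ := by
  have := h.finiteDimensional
  have := h.isGalois
  let b := Module.finBasis k L
  obtain ⟨θ, hθ⟩ := Field.exists_primitive_element (RatFunc M) E
  obtain ⟨k₀, hfg, hmin, hlift⟩ := exists_fg_lifts_of_adjoin_simple_eq_top (k := k) hθ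
    (((minpoly (RatFunc M) θ).rootSet_finite E).union (Set.finite_range (ι ∘ b)))
  refine ⟨k₀, hfg, ?_⟩
  let : Algebra (RatFunc k₀) (RatFunc M) := (ratFuncMap (algebraMap k₀ M)).toAlgebra
  let : Algebra (RatFunc k₀) E := Algebra.compHom E (ratFuncMap (algebraMap k₀ M))
  have : IsScalarTower (RatFunc k₀) (RatFunc M) E := .of_algebraMap_eq fun _ => rfl
  have : IsScalarTower k₀ (RatFunc k₀) E := .of_algebraMap_eq fun a => by
    change algebraMap k₀ E a = algebraMap (RatFunc M) E (ratFuncMap _ (RatFunc.C a))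
    rw [ratFuncMap_C, IsScalarTower.algebraMap_apply k₀ M E,
      IsScalarTower.algebraMap_apply M (RatFunc M) E]
    rfl
  have : IsScalarTower k (RatFunc k₀) E := .to₁₃₄ k k₀ (RatFunc k₀) E
  have hmem (a : E) (ha : a ∈ (minpoly (RatFunc M) θ).rootSet E ∪ Set.range (ι ∘ b)) :
      a ∈ (RatFunc k₀)⟮θ⟯ := by
    obtain ⟨p, hp, rfl⟩ := hlift a ha
    exact aeval_mem_adjoin_simple_of_mem_lifts hp
  have hι (x : L) : ι x ∈ (RatFunc k₀)⟮θ⟯ := by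
    rw [← b.sum_repr x, map_sum]
    refine sum_mem fun i _ => ?_
    rw [map_smul]
    exact smul_mem ((RatFunc k₀)⟮θ⟯.restrictScalars k) (hmem _ (.inr ⟨i, rfl⟩))
  have := adjoin.finiteDimensional (isIntegral_of_minpoly_mem_lifts (.of_finite _ θ) hmin)
  have := isGalois_adjoin_simple_of_minpoly_mem_lifts hmin fun a ha => hmem a (.inl ha)
  obtain ⟨ι₀, β₀, h₀⟩ := h.exists_restrict hι
    (bijective_restrictRestrictAlgEquivMapHom_adjoin_simple hθ hmin)
  exact h₀.hasGeomGaloisSolution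

end GeometricSolutions

theorem statement_8_general (k : Type) [Field k] (G : Type) [Group G]
    (L : Type) [Field L] [Algebra k L] [FiniteDimensional k L] (α : G →* (L ≃ₐ[k] L))
    (M : Type) [Field M] [Algebra k M] (hM : HasGeomGaloisSolution k G L α M) :
    ∃ k₀ : IntermediateField k M, k₀.FG ∧ HasGeomGaloisSolution k G L α k₀ := by
  obtain ⟨E, ι, β, h⟩ := hM.exists_isGeomGaloisSolution
  exact h.exists_fg_hasGeomGaloisSolution

/-- **Descent of geometric Galois solutions to a finitely generated subextension.**
Let `k` be a field, `α : G → Gal(L/k)` a finite Galois embedding problem over `k`, and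
`M/k` a field extension which is linearly disjoint from `L` over `k` (encoded by
`L ⊗_k M` being an integral domain) such that the induced embedding problem `α_M` has a
geometric Galois solution.  Then there is an intermediate field `k ⊆ k₀ ⊆ M`, finitely
generated as a field extension of `k`, such that `α_{k₀}` has a geometric Galois
solution. -/
theorem statement_8 (k : Type) [Field k] (G : Type) [Group G] [Finite G]
    (L : Type) [Field L] [Algebra k L] [FiniteDimensional k L] [IsGalois k L]
    (α : G →* (L ≃ₐ[k] L)) (hα : Function.Surjective α)
    (M : Type) [Field M] [Algebra k M]
    (hdisj : IsDomain (TensorProduct k L M))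
    (hM : HasGeomGaloisSolution k G L α M) :
    ∃ k₀ : IntermediateField k M, k₀.FG ∧ HasGeomGaloisSolution k G L α k₀ := by
  exact statement_8_general k G L α M hM
end

section
/- Let k be a field, T an indeterminate, and y ∈ k. Set P_y(T,X) = X³ + (T−y)X + (T−y) ∈ k[T][X]. Then P_y(T,X), viewed as a polynomial in X over the rational function field k(T), is irreducible and separable, and the Galois group of its splitting field over k(T) is isomorphic to the symmetric group S₃. -/
set_option synthInstance.maxHeartbeats 1000000
set_option maxHeartbeats 1000000

/-
Irreducibility of `X³ + tX + t` over `k(T)` is Eisenstein's criterion at a simple prime factor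
of `t`. The Galois group permutes the three roots `x, y, z`, so it is all of `S₃` as soon as its
order is divisible by `2` as well as by `3`. In characteristic `≠ 2` that amounts to the
discriminant not being a square. The quadratic resolvent, whose roots are the two cyclic sums
`x²y + y²z + z²x` and `x²z + z²y + y²x`, has the same discriminant and works in every
characteristic. Here it is `Y² - 3tY + (t³ + 9t²)`. A root `u ∈ k(T)` would be integral, hence in
`k[T]`, and `u(u - 3t) = -(t³ + 9t²)` is impossible there: the right side has degree `3 deg t`,
the left side degree `2 deg u` or at most `2 deg t`, and `deg t` is odd.
-/

open Polynomial

theorem nonempty_gal_mulEquiv_perm_of_factorial_dvd_card {K : Type*} [Field K] {f : K[X]}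
    (hsep : f.Separable) (hdvd : f.natDegree.factorial ∣ Nat.card f.Gal) :
    Nonempty (f.Gal ≃* Equiv.Perm (Fin f.natDegree)) := by
  let L := f.SplittingField
  have hsplits : (f.map (algebraMap K L)).Splits := SplittingField.splits f
  have : Fact (f.map (algebraMap K L)).Splits := ⟨hsplits⟩
  have hroots : Fintype.card (f.rootSet L) = f.natDegree :=
    card_rootSet_eq_natDegree hsep hsplits
  have hcard : Nat.card (Equiv.Perm (f.rootSet L)) ≤ Nat.card f.Gal := by
    rw [Nat.card_perm, Nat.card_eq_fintype_card, hroots]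
    exact Nat.le_of_dvd Nat.card_pos hdvd
  have hbij : Function.Bijective (Gal.galActionHom f L) :=
    (Gal.galActionHom_injective f L).bijective_of_nat_card_le hcard
  exact ⟨(MulEquiv.ofBijective _ hbij).trans
    (Equiv.permCongrHom (Fintype.equivFinOfCardEq hroots))⟩

theorem separable_toPoly_of_irreducible_of_c_ne_zero {K : Type*} [Field K] {P : Cubic K}
    (hirr : Irreducible P.toPoly) (hc : P.c ≠ 0) : P.toPoly.Separable := by
  rw [separable_iff_derivative_ne_zero hirr]
  intro hderiv
  have hcoeff : (derivative P.toPoly).coeff 0 = P.c := by simp [coeff_derivative]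
  exact hc (by rw [← hcoeff, hderiv, coeff_zero])

section QuadraticResolvent

/-- The quadratic resolvent of a cubic `P = aX³ + bX² + cX + d` with roots `x, y, z`: the monic
quadratic with roots `a²(x²y + y²z + z²x)` and `a²(x²z + z²y + y²x)`, which odd permutations of
`x, y, z` exchange. The factor `a²` makes its coefficients polynomials in `a, b, c, d`. -/
noncomputable def quadraticResolvent {R : Type*} [CommRing R] (P : Cubic R) : R[X] :=
  X ^ 2 + C (P.b * P.c - 3 * P.a * P.d) * X +
    C (P.b ^ 3 * P.d + P.a * P.c ^ 3 - 6 * P.a * P.b * P.c * P.d + 9 * P.a ^ 2 * P.d ^ 2)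

theorem monic_quadraticResolvent {R : Type*} [CommRing R] (P : Cubic R) :
    (quadraticResolvent P).Monic := by
  unfold quadraticResolvent
  monicity!

theorem natDegree_quadraticResolvent {R : Type*} [CommRing R] [Nontrivial R] (P : Cubic R) :
    (quadraticResolvent P).natDegree = 2 := by
  unfold quadraticResolvent
  compute_degree!

theorem quadraticResolvent_map {R S : Type*} [CommRing R] [CommRing S] (φ : R →+* S)
    (P : Cubic R) : quadraticResolvent (P.map φ) = (quadraticResolvent P).map φ := by
  simp [quadraticResolvent, Cubic.map, map_ofNat φ]

variable {K L : Type*} [Field K] [Field L] {P : Cubic K}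

theorem quadraticResolvent_map_eq_prod {φ : K →+* L} {x y z : L} (ha : P.a ≠ 0)
    (hroots : (P.map φ).roots = {x, y, z}) :
    (quadraticResolvent P).map φ =
      (X - C (φ P.a ^ 2 * (x ^ 2 * y + y ^ 2 * z + z ^ 2 * x))) *
        (X - C (φ P.a ^ 2 * (x ^ 2 * z + z ^ 2 * y + y ^ 2 * x))) := by
  rw [← quadraticResolvent_map, Cubic.eq_sum_three_roots ha hroots]
  simp only [quadraticResolvent, map_add, map_sub, map_mul, map_neg, map_pow, map_ofNat]
  ring

theorem splits_quadraticResolvent_map {φ : K →+* L} (ha : P.a ≠ 0)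
    (hsplits : (P.toPoly.map φ).Splits) : ((quadraticResolvent P).map φ).Splits := by
  obtain ⟨x, y, z, hroots⟩ := (Cubic.splits_iff_roots_eq_three ha).mp hsplits
  rw [quadraticResolvent_map_eq_prod ha hroots]
  exact (Splits.X_sub_C _).mul (Splits.X_sub_C _)

theorem nonempty_gal_mulEquiv_perm_of_irreducible_quadraticResolvent (ha : P.a ≠ 0)
    (hirr : Irreducible P.toPoly) (hsep : P.toPoly.Separable)
    (hres : Irreducible (quadraticResolvent P)) :
    Nonempty (P.toPoly.Gal ≃* Equiv.Perm (Fin 3)) := by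
  have hdeg : P.toPoly.natDegree = 3 := Cubic.natDegree_of_a_ne_zero ha
  have hsplits := SplittingField.splits P.toPoly
  have hthree : 3 ∣ Nat.card P.toPoly.Gal := by
    rw [Gal.card_of_separable hsep, ← hdeg]
    exact hirr.natDegree_dvd_finrank hsplits
  have htwo : 2 ∣ Nat.card P.toPoly.Gal := by
    rw [Gal.card_of_separable hsep, ← natDegree_quadraticResolvent P]
    exact hres.natDegree_dvd_finrank (splits_quadraticResolvent_map ha hsplits)
  have hsix : P.toPoly.natDegree.factorial ∣ Nat.card P.toPoly.Gal := by
    rw [hdeg]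
    exact Nat.Coprime.mul_dvd_of_dvd_of_dvd (by norm_num) hthree htwo
  exact hdeg ▸ nonempty_gal_mulEquiv_perm_of_factorial_dvd_card hsep hsix

end QuadraticResolvent

section CubicFamily

/-- The one-parameter family of cubics `X³ + tX + t`, of which `P_y(T,X)` is the member
`t = T - y`. It is bundled as a `Cubic` so that Vieta's formulas for `Cubic` apply. -/
def cubicFamily {R : Type*} [Semiring R] (t : R) : Cubic R := ⟨1, 0, t, t⟩

theorem toPoly_cubicFamily {R : Type*} [Semiring R] (t : R) :
    (cubicFamily t).toPoly = X ^ 3 + C t * X + C t := by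
  simp [cubicFamily, Cubic.toPoly]

theorem cubicFamily_map {R S : Type*} [Semiring R] [Semiring S] (φ : R →+* S) (t : R) :
    (cubicFamily t).map φ = cubicFamily (φ t) := by
  simp [cubicFamily, Cubic.map]

theorem quadraticResolvent_cubicFamily {R : Type*} [CommRing R] (t : R) :
    quadraticResolvent (cubicFamily t) = X ^ 2 - C (3 * t) * X + C (t ^ 3 + 9 * t ^ 2) := by
  simp [quadraticResolvent, cubicFamily, sub_eq_add_neg]

theorem irreducible_toPoly_cubicFamily_of_eisenstein {R : Type*} [CommRing R] [IsDomain R]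
    {t : R} {𝔭 : Ideal R} (hprime : 𝔭.IsPrime) (hmem : t ∈ 𝔭) (hnotMem : t ∉ 𝔭 ^ 2) :
    Irreducible (cubicFamily t).toPoly := by
  have hmonic : (cubicFamily t).toPoly.Monic := Cubic.monic_of_a_eq_one rfl
  have hdeg : (cubicFamily t).toPoly.natDegree = 3 := Cubic.natDegree_of_a_ne_zero one_ne_zero
  have heis : (cubicFamily t).toPoly.IsEisensteinAt 𝔭 :=
    { leading := hmonic.leadingCoeff ▸ hprime.one_notMem
      mem := by
        intro n hn
        rw [hdeg] at hn
        interval_cases n <;> simp [cubicFamily, hmem]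
      notMem := by simpa [cubicFamily] using hnotMem }
  exact heis.irreducible hprime hmonic.isPrimitive (by omega)

theorem irreducible_toPoly_cubicFamily_of_squarefree {R : Type*} [CommRing R] [IsDomain R]
    [UniqueFactorizationMonoid R] {t : R} (hsq : Squarefree t) (hunit : ¬IsUnit t) :
    Irreducible (cubicFamily t).toPoly := by
  obtain ⟨p, hp, hpt⟩ := WfDvdMonoid.exists_irreducible_factor hunit hsq.ne_zero
  refine irreducible_toPoly_cubicFamily_of_eisenstein (𝔭 := Ideal.span {p})
    ((Ideal.span_singleton_prime hp.ne_zero).mpr hp.prime) (Ideal.mem_span_singleton.mpr hpt) ?_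
  rw [Ideal.span_singleton_pow, Ideal.mem_span_singleton, pow_two]
  exact fun h ↦ hp.not_isUnit (hsq p h)

variable {k : Type*} [CommRing k] [IsDomain k] {t : k[X]}

theorem mul_sub_ne_of_odd_natDegree (hodd : Odd t.natDegree) (u : k[X]) :
    u * (u - 3 * t) ≠ -(t ^ 3 + 9 * t ^ 2) := by
  have hpos : 0 < t.natDegree := hodd.pos
  have hconst : (9 * t ^ 2).natDegree ≤ 2 * t.natDegree := by
    rw [← C_ofNat, ← natDegree_pow]
    exact natDegree_C_mul_le _ _
  have hrhs : (-(t ^ 3 + 9 * t ^ 2)).natDegree = 3 * t.natDegree := by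
    rw [natDegree_neg, natDegree_add_eq_left_of_natDegree_lt, natDegree_pow]
    rw [natDegree_pow]
    omega
  have hlinear : (3 * t).natDegree ≤ t.natDegree := by
    rw [← C_ofNat]
    exact natDegree_C_mul_le _ _
  intro h
  have hlhs : (u * (u - 3 * t)).natDegree = 3 * t.natDegree := by rw [h, hrhs]
  rcases le_or_gt u.natDegree t.natDegree with hle | hlt
  · have hsub : (u - 3 * t).natDegree ≤ t.natDegree :=
      (natDegree_sub_le_of_le hle hlinear).trans (max_self _).le
    have hmul := natDegree_mul_le_of_le hle hsub
    omega
  · have hsub : (u - 3 * t).natDegree = u.natDegree :=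
      natDegree_sub_eq_left_of_natDegree_lt (hlinear.trans_lt hlt)
    have hu : u ≠ 0 := ne_zero_of_natDegree_gt hlt
    have hu' : u - 3 * t ≠ 0 := ne_zero_of_natDegree_gt (hsub ▸ hlt)
    rw [natDegree_mul hu hu', hsub] at hlhs
    obtain ⟨m, hm⟩ := hodd
    omega

theorem irreducible_quadraticResolvent_cubicFamily (hodd : Odd t.natDegree) :
    Irreducible (quadraticResolvent (cubicFamily t)) := by
  have hdeg := natDegree_quadraticResolvent (cubicFamily t)
  rw [(monic_quadraticResolvent _).irreducible_iff_roots_eq_zero_of_degree_le_three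
    hdeg.ge (by omega)]
  refine Multiset.eq_zero_of_forall_notMem fun u hu ↦ mul_sub_ne_of_odd_natDegree hodd u ?_
  have hroot : u ^ 2 - 3 * t * u + (t ^ 3 + 9 * t ^ 2) = 0 := by
    simpa [quadraticResolvent_cubicFamily] using isRoot_of_mem_roots hu
  linear_combination hroot

end CubicFamily

theorem statement_10_general {k F : Type*} [Field k] [Field F] [Algebra k[X] F]
    [IsFractionRing k[X] F] {t : k[X]} (hsq : Squarefree t) (hodd : Odd t.natDegree) :
    Irreducible (X ^ 3 + C (algebraMap k[X] F t) * X + C (algebraMap k[X] F t)) ∧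
    (X ^ 3 + C (algebraMap k[X] F t) * X + C (algebraMap k[X] F t)).Separable ∧
    Nonempty ((X ^ 3 + C (algebraMap k[X] F t) * X + C (algebraMap k[X] F t)).Gal ≃*
      Equiv.Perm (Fin 3)) := by
  have hunit : ¬IsUnit t := fun h ↦ hodd.pos.ne' (natDegree_eq_zero_of_isUnit h)
  have hirr : Irreducible (cubicFamily (algebraMap k[X] F t)).toPoly := by
    rw [← cubicFamily_map, Cubic.map_toPoly,
      ← (Cubic.monic_of_a_eq_one rfl).irreducible_iff_irreducible_map_fraction_map]
    exact irreducible_toPoly_cubicFamily_of_squarefree hsq hunit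
  have hres : Irreducible (quadraticResolvent (cubicFamily (algebraMap k[X] F t))) := by
    rw [← cubicFamily_map, quadraticResolvent_map,
      ← (monic_quadraticResolvent _).irreducible_iff_irreducible_map_fraction_map]
    exact irreducible_quadraticResolvent_cubicFamily hodd
  have ht : algebraMap k[X] F t ≠ 0 :=
    (map_ne_zero_iff _ (IsFractionRing.injective k[X] F)).mpr hsq.ne_zero
  have hsep := separable_toPoly_of_irreducible_of_c_ne_zero hirr ht
  rw [← toPoly_cubicFamily]
  exact ⟨hirr, hsep, nonempty_gal_mulEquiv_perm_of_irreducible_quadraticResolvent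
    one_ne_zero hirr hsep hres⟩

/-- For any field `k` and `y ∈ k`, the polynomial
`P_y(T,X) = X³ + (T−y)X + (T−y)`, viewed as a polynomial in `X` over the rational
function field `k(T)`, is irreducible and separable, and the Galois group of its
splitting field over `k(T)` is isomorphic to the symmetric group `S₃`. -/
theorem statement_10 (k : Type) [Field k] (y : k) :
    Irreducible (Polynomial.X ^ 3
        + Polynomial.C (RatFunc.X - RatFunc.C y) * Polynomial.X
        + Polynomial.C (RatFunc.X - RatFunc.C y) : Polynomial (RatFunc k)) ∧
    (Polynomial.X ^ 3
        + Polynomial.C (RatFunc.X - RatFunc.C y) * Polynomial.X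
        + Polynomial.C (RatFunc.X - RatFunc.C y) : Polynomial (RatFunc k)).Separable ∧
    Nonempty ((Polynomial.X ^ 3
        + Polynomial.C (RatFunc.X - RatFunc.C y) * Polynomial.X
        + Polynomial.C (RatFunc.X - RatFunc.C y) : Polynomial (RatFunc k)).Gal
      ≃* Equiv.Perm (Fin 3)) := by
  rw [← RatFunc.algebraMap_X, ← RatFunc.algebraMap_C, ← map_sub]
  exact statement_10_general (irreducible_X_sub_C y).squarefree (by simp)
end

section
/- Let k be a field, T an indeterminate, and for y ∈ k set P_y(T,X) = X³ + (T−y)X + (T−y) ∈ k[T][X]. For y ∈ k, let k_y denote the field generated over k(T) by any given root of P_y(T,X) (in a fixed algebraic closure of k(T)). Then for y₁ ≠ y₂ in k, one has k_y₁ ≠ k_y₂ (for any choices of roots). -/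
set_option synthInstance.maxHeartbeats 1000000
set_option maxHeartbeats 1000000

/-!
In the coordinate `u = x + 1`, a root `x` of `X³ + (T - y)X + (T - y)` satisfies
`(T - y)u = -(u - 1)³`, so `k(T, x) = k(u)` is purely transcendental over `k`. If a root `x₂` for
`y₂` lies in the field `k(u)` of a root for `y₁`, then `v = x₂ + 1` is a rational function of `u`
with `(v - 1)³ / v = (u - 1)³ / u + (y₂ - y₁)`. Comparing poles forces `v = a * u`
for a constant `a`; the residues at `u = 0` then give `a = 1`, and hence `y₁ = y₂`.
-/

section

open Polynomial IntermediateField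

section Polynomial

variable {R : Type*} [CommRing R] [IsDomain R] {p q : R[X]}

theorem dvd_X_and_isUnit_of_X_mul_sub_pow_eq (hpq : IsCoprime p q) {g : R[X]} {n : ℕ}
    (h : X * (p - q) ^ n = g * (p * q ^ 2)) : p ∣ X ∧ IsUnit q := by
  have hp_coprime : IsCoprime p (p - q) := by
    simpa [neg_add_eq_sub] using hpq.neg_right.add_mul_left_right 1
  have hq_coprime : IsCoprime q (p - q) := by
    simpa [sub_eq_add_neg] using hpq.symm.add_mul_left_right (-1)
  have hp_dvd : p ∣ X :=
    hp_coprime.pow_right.dvd_of_dvd_mul_right ⟨g * q ^ 2, by rw [h]; ring⟩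
  have hqq_dvd : q * q ∣ X :=
    (hq_coprime.mul_left hq_coprime).pow_right.dvd_of_dvd_mul_right ⟨g * p, by rw [h]; ring⟩
  exact ⟨hp_dvd, irreducible_X.squarefree q hqq_dvd⟩

-- For `v = p / q` the hypothesis is `(v - 1)³ / v = (X - 1)³ / X + c` with denominators cleared.
theorem eq_zero_of_X_mul_sub_pow_eq (hpq : IsCoprime p q) {c : R}
    (h : X * (p - q) ^ 3 = ((X - 1) ^ 3 + C c * X) * (p * q ^ 2)) : c = 0 := by
  obtain ⟨hp_dvd, hq_unit⟩ := dvd_X_and_isUnit_of_X_mul_sub_pow_eq hpq h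
  obtain ⟨b, hb, rfl⟩ := isUnit_iff.1 hq_unit
  obtain ⟨r, rfl⟩ : X ∣ p := by
    simpa [X_dvd_iff, coeff_zero_eq_eval_zero, hb.ne_zero] using congrArg (eval 0) h
  have hr_unit : IsUnit r :=
    isUnit_of_dvd_one ((mul_dvd_mul_iff_left X_ne_zero).1 (by simpa using hp_dvd))
  obtain ⟨a, ha, rfl⟩ := isUnit_iff.1 hr_unit
  have h_cancel : (X * C a - C b) ^ 3 = ((X - 1) ^ 3 + C c * X) * (C a * C b ^ 2) :=
    mul_left_cancel₀ X_ne_zero (by rw [h]; ring)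
  have hab : b = a := by
    have h_eval : (0 * a - b) ^ 3 = ((0 - 1) ^ 3 + c * 0) * (a * b ^ 2) := by
      simpa using congrArg (eval 0) h_cancel
    exact mul_right_cancel₀ (pow_ne_zero 2 hb.ne_zero) (by linear_combination -h_eval)
  simpa [hab, ha.ne_zero] using congrArg (eval 1) h_cancel

end Polynomial

variable {k L : Type*} [Field k] [Field L] [Algebra k L]

theorem exists_isCoprime_eq_aeval_div_of_mem_adjoin_simple {u v : L} (hu : Transcendental k u)
    (hv : v ∈ k⟮u⟯) :
    ∃ p q : k[X], IsCoprime p q ∧ q ≠ 0 ∧ v = aeval u p / aeval u q := by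
  obtain ⟨r, hr⟩ := (RatFunc.algEquivOfTranscendental u hu).surjective ⟨v, hv⟩
  refine ⟨r.num, r.denom, r.isCoprime_num_denom, r.denom_ne_zero, ?_⟩
  rw [← RatFunc.algEquivOfTranscendental_apply u hu, hr]

theorem eq_zero_of_mul_sub_one_pow_eq {u v : L} (hu : Transcendental k u) (hv : v ∈ k⟮u⟯) {c : k}
    (h : u * (v - 1) ^ 3 = ((u - 1) ^ 3 + algebraMap k L c * u) * v) : c = 0 := by
  obtain ⟨p, q, hpq, hq, rfl⟩ := exists_isCoprime_eq_aeval_div_of_mem_adjoin_simple hu hv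
  have hqu : aeval u q ≠ 0 := fun h₀ => hq (transcendental_iff.1 hu q h₀)
  refine eq_zero_of_X_mul_sub_pow_eq hpq (transcendental_iff_injective.1 hu ?_)
  field_simp at h
  simp only [map_add, map_mul, map_sub, map_pow, map_one, aeval_X, aeval_C]
  linear_combination h

theorem transcendental_of_mem_adjoin_simple {t u : L} (ht : Transcendental k t)
    (ht_mem : t ∈ k⟮u⟯) : Transcendental k u := by
  intro hu_algebraic
  have : Algebra.IsAlgebraic k k⟮u⟯ := isAlgebraic_adjoin_simple hu_algebraic.isIntegral
  exact ht (isAlgebraic_iff.1 (Algebra.IsAlgebraic.isAlgebraic (R := k) (⟨t, ht_mem⟩ : k⟮u⟯)))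

theorem adjoin_pair_le_adjoin_simple_add_one {t x : L} {y : k}
    (h : x ^ 3 + (t - algebraMap k L y) * x + (t - algebraMap k L y) = 0) :
    k⟮t, x⟯ ≤ k⟮x + 1⟯ := by
  have hu : x + 1 ∈ k⟮x + 1⟯ := mem_adjoin_simple_self k _
  have hx : x ∈ k⟮x + 1⟯ := by simpa using sub_mem hu (one_mem _)
  have hu₀ : x + 1 ≠ 0 := by
    intro h₀
    obtain rfl : x = -1 := eq_neg_of_add_eq_zero_left h₀
    exact one_ne_zero (α := L) (by linear_combination -h)
  have ht : t = algebraMap k L y - x ^ 3 / (x + 1) := by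
    field_simp
    linear_combination h
  have ht_mem : t ∈ k⟮x + 1⟯ := by
    rw [ht]
    exact sub_mem (IntermediateField.algebraMap_mem _ y) (div_mem (pow_mem hx 3) hu)
  exact adjoin_le_iff.2 (Set.insert_subset ht_mem (Set.singleton_subset_iff.2 hx))

theorem notMem_adjoin_pair_of_cubic_eq_zero {t : L} (ht : Transcendental k t) {y₁ y₂ : k}
    (hy : y₁ ≠ y₂) {x₁ x₂ : L}
    (h₁ : x₁ ^ 3 + (t - algebraMap k L y₁) * x₁ + (t - algebraMap k L y₁) = 0)
    (h₂ : x₂ ^ 3 + (t - algebraMap k L y₂) * x₂ + (t - algebraMap k L y₂) = 0) :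
    x₂ ∉ k⟮t, x₁⟯ := by
  intro hx₂
  have h_le : k⟮t, x₁⟯ ≤ k⟮x₁ + 1⟯ := adjoin_pair_le_adjoin_simple_add_one h₁
  have hu : Transcendental k (x₁ + 1) :=
    transcendental_of_mem_adjoin_simple ht (h_le (subset_adjoin k _ (Set.mem_insert t _)))
  have hv : x₂ + 1 ∈ k⟮x₁ + 1⟯ := add_mem (h_le hx₂) (one_mem _)
  refine hy (sub_eq_zero.1 (eq_zero_of_mul_sub_one_pow_eq hu hv ?_)).symm
  rw [map_sub]
  linear_combination (x₁ + 1) * h₂ - (x₂ + 1) * h₁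

theorem restrictScalars_adjoin_of_adjoin_eq_top {F : Type*} [Field F] [Algebra k F] [Algebra F L]
    [IsScalarTower k F L] {A : Set F} (hA : adjoin k A = ⊤) (S : Set L) :
    (adjoin F S).restrictScalars k = adjoin k (algebraMap F L '' A ∪ S) := by
  refine le_antisymm ?_ (adjoin_le_iff.2 (Set.union_subset ?_ (subset_adjoin F S)))
  · have h_range : Set.range (algebraMap F L) ⊆ adjoin k (algebraMap F L '' A) := by
      have h_map := adjoin_map k A (IsScalarTower.toAlgHom k F L)
      rw [hA] at h_map
      rintro _ ⟨a, rfl⟩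
      exact h_map.le ⟨a, trivial, rfl⟩
    exact (adjoin_subset_adjoin_iff F).2 ⟨h_range.trans (adjoin.mono k _ _ Set.subset_union_left),
      Set.subset_union_right.trans (subset_adjoin k _)⟩
  · rintro _ ⟨a, -, rfl⟩
    exact (adjoin F S).algebraMap_mem a

theorem statement_11_general {k L : Type*} [Field k] [Field L] [Algebra (RatFunc k) L] {y₁ y₂ : k}
    (hy : y₁ ≠ y₂) {x₁ x₂ : L}
    (h₁ : x₁ ^ 3 + algebraMap (RatFunc k) L (RatFunc.X - RatFunc.C y₁) * x₁
        + algebraMap (RatFunc k) L (RatFunc.X - RatFunc.C y₁) = 0)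
    (h₂ : x₂ ^ 3 + algebraMap (RatFunc k) L (RatFunc.X - RatFunc.C y₂) * x₂
        + algebraMap (RatFunc k) L (RatFunc.X - RatFunc.C y₂) = 0) :
    x₂ ∉ adjoin (RatFunc k) {x₁} := by
  let _ : Algebra k L := Algebra.compHom L (algebraMap k (RatFunc k))
  have : IsScalarTower k (RatFunc k) L := .of_algebraMap_eq fun _ => rfl
  have hT : Transcendental k (algebraMap (RatFunc k) L RatFunc.X) :=
    (transcendental_algebraMap_iff (algebraMap (RatFunc k) L).injective).2 RatFunc.transcendental_X
  simp only [map_sub, ← RatFunc.algebraMap_eq_C, ← IsScalarTower.algebraMap_apply] at h₁ h₂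
  rw [← mem_restrictScalars k, restrictScalars_adjoin_of_adjoin_eq_top RatFunc.adjoin_X,
    Set.image_singleton]
  exact notMem_adjoin_pair_of_cubic_eq_zero hT hy h₁ h₂

end

/-- For `y ∈ k`, let `k_y = k(T)(x)` be the field generated over `k(T)` by any root `x`
of `P_y(T,X) = X³ + (T−y)X + (T−y)` in a fixed algebraic closure of `k(T)`.  Then for
`y₁ ≠ y₂` in `k` one has `k_{y₁} ≠ k_{y₂}`, for any choices of roots. -/
theorem statement_11 (k : Type) [Field k] (y₁ y₂ : k) (hy : y₁ ≠ y₂)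
    (x₁ x₂ : AlgebraicClosure (RatFunc k))
    (h₁ : x₁ ^ 3
        + algebraMap (RatFunc k) (AlgebraicClosure (RatFunc k))
            (RatFunc.X - RatFunc.C y₁) * x₁
        + algebraMap (RatFunc k) (AlgebraicClosure (RatFunc k))
            (RatFunc.X - RatFunc.C y₁) = 0)
    (h₂ : x₂ ^ 3
        + algebraMap (RatFunc k) (AlgebraicClosure (RatFunc k))
            (RatFunc.X - RatFunc.C y₂) * x₂
        + algebraMap (RatFunc k) (AlgebraicClosure (RatFunc k))
            (RatFunc.X - RatFunc.C y₂) = 0) :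
    IntermediateField.adjoin (RatFunc k) {x₁} ≠ IntermediateField.adjoin (RatFunc k) {x₂} := by
  intro h
  exact statement_11_general hy h₁ h₂ (h ▸ IntermediateField.mem_adjoin_simple_self _ x₂)
end

section
/- Let k be a field, Y = (Y₁,…,Y_m) a tuple of algebraically independent indeterminates over k, and k₀ a finite separable extension of k(Y) with k₀ = k(Y, y) for some y ∈ k₀. Let Z and T be further indeterminates, let N be a finite Galois extension of k₀(Z), let x be a root of the polynomial P_y(T,X) = X³ + (T−y)X + (T−y) in an algebraic closure of N(T), and set E = N(T,x). Then Aut(E/k(Z,Y,T)) = Gal(E/k₀(Z,T,x)): an automorphism of E fixes k(Z,Y,T) pointwise if and only if it fixes k₀(Z,T,x) pointwise. -/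
set_option synthInstance.maxHeartbeats 1000000
set_option maxHeartbeats 1000000

/-!
Put `u = x + 1`. The equation `P_y(T, x) = 0` reads `T = y - (u - 1)³ / u`, so `E = N(u)` is a
rational function field over `N`. Let `σ` fix `k(Z, Y, T)`. Since `y` is algebraic over `k(Y)`,
so is `σ y`, and the elements of `N(u)` algebraic over `N` are constants; hence `σ y ∈ N`. With
`v = σ u`, the equation `σ T = T` becomes `v² - 3v - v⁻¹ = u² - 3u - u⁻¹ + (σ y - y)`. The right
side has a simple pole at `u = 0`, a double pole at infinity and no others. For `v = p / q` in
lowest terms this forces `q² p` to be associated to `u`, so `v = a u` with `a ∈ N`, and comparing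
coefficients gives `v = u` and `σ y = y`.
-/

section RationalFunctions

open Polynomial

theorem isCoprime_sq_mul_cubic {R : Type*} [CommRing R] {p q d : R} (b : R)
    (hpq : IsCoprime p q) (hd : IsUnit d) :
    IsCoprime (q ^ 2 * p) (p ^ 3 + b * p ^ 2 * q + d * q ^ 3) := by
  have hq : IsCoprime q (p ^ 3 + q * (b * p ^ 2 + d * q ^ 2)) :=
    (hpq.symm.pow_right (n := 3)).add_mul_left_right _
  have hp : IsCoprime p (d * q ^ 3 + p * (p ^ 2 + b * p * q)) :=
    ((isCoprime_mul_unit_left_right hd p (q ^ 3)).mpr hpq.pow_right).add_mul_left_right _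
  refine IsCoprime.mul_left (IsCoprime.pow_left ?_) ?_
  · convert hq using 1
    ring
  · convert hp using 1
    ring

variable {K : Type*} [Field K]

theorem associated_sq_mul_X_of_cubic_mul_eq {p q : K[X]} {b c d : K} (hd : d ≠ 0)
    (hpq : IsCoprime p q)
    (h : (p ^ 3 + C b * p ^ 2 * q + C d * q ^ 3) * X =
      (X ^ 3 + C b * X ^ 2 + C c * X + C d) * (q ^ 2 * p)) :
    Associated (q ^ 2 * p) X := by
  have hdC : IsUnit (C d) := isUnit_C.mpr hd.isUnit
  have hX : IsCoprime X (C d + X * (X ^ 2 + C b * X + C c)) :=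
    (isCoprime_one_right.of_isCoprime_of_dvd_right hdC.dvd).add_mul_left_right _
  rw [show C d + X * (X ^ 2 + C b * X + C c) = X ^ 3 + C b * X ^ 2 + C c * X + C d by ring] at hX
  refine associated_of_dvd_dvd ((isCoprime_sq_mul_cubic (C b) hpq hdC).dvd_of_dvd_mul_left ?_)
    (hX.dvd_of_dvd_mul_left ?_)
  · rw [h]
    exact dvd_mul_left _ _
  · rw [← h]
    exact dvd_mul_left _ _

theorem eq_one_and_eq_C_mul_X_of_associated {p q : K[X]} (hq : q.Monic)
    (h : Associated (q ^ 2 * p) X) : q = 1 ∧ ∃ a, a ≠ 0 ∧ p = C a * X := by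
  have hq_unit : IsUnit q :=
    h.symm.irreducible irreducible_X |>.squarefree q ⟨p, by rw [sq]⟩
  obtain rfl : q = 1 := hq.eq_one_of_isUnit hq_unit
  obtain ⟨w, hw⟩ := h.symm
  obtain ⟨a, ha, haw⟩ := Polynomial.isUnit_iff.mp w.isUnit
  exact ⟨rfl, a, ha.ne_zero, by rw [haw, mul_comm, hw, one_pow, one_mul]⟩

theorem eq_one_and_eq_X_and_eq_zero_of_cubic_mul_eq {p q : K[X]} {b c d : K} (hd : d ≠ 0)
    (hq : q.Monic) (hpq : IsCoprime p q)
    (h : (p ^ 3 + C b * p ^ 2 * q + C d * q ^ 3) * X =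
      (X ^ 3 + C b * X ^ 2 + C c * X + C d) * (q ^ 2 * p)) :
    q = 1 ∧ p = X ∧ c = 0 := by
  obtain ⟨rfl, a, ha, rfl⟩ :=
    eq_one_and_eq_C_mul_X_of_associated hq
      (associated_sq_mul_X_of_cubic_mul_eq hd hpq h)
  have hcubic : C a ^ 3 * X ^ 3 + C b * C a ^ 2 * X ^ 2 + C d =
      C a * (X ^ 3 + C b * X ^ 2 + C c * X + C d) :=
    mul_right_cancel₀ X_ne_zero (by linear_combination h)
  obtain rfl : a = 1 := by simpa [hd] using congrArg (eval 0) hcubic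
  have hcX : C c * X = (0 : K[X]) := by
    simp only [C_1] at hcubic
    linear_combination -hcubic
  exact ⟨rfl, by rw [C_1, one_mul], by simpa using hcX⟩

theorem ratFunc_eq_X_and_const_eq_zero {v : RatFunc K} {b c d : K} (hd : d ≠ 0) (hv : v ≠ 0)
    (h : v ^ 2 + RatFunc.C b * v + RatFunc.C d * v⁻¹ =
      RatFunc.X ^ 2 + RatFunc.C b * RatFunc.X + RatFunc.C d * RatFunc.X⁻¹ + RatFunc.C c) :
    v = RatFunc.X ∧ c = 0 := by
  have hcleared : (v.num ^ 3 + C b * v.num ^ 2 * v.denom + C d * v.denom ^ 3) * X =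
      (X ^ 3 + C b * X ^ 2 + C c * X + C d) * (v.denom ^ 2 * v.num) := by
    apply RatFunc.algebraMap_injective K
    have hnum := RatFunc.algebraMap_ne_zero (RatFunc.num_ne_zero hv)
    have hdenom := RatFunc.algebraMap_ne_zero v.denom_ne_zero
    have hX := RatFunc.X_ne_zero (K := K)
    rw [← RatFunc.num_div_denom v] at h
    simp only [map_mul, map_add, map_pow, RatFunc.algebraMap_X, RatFunc.algebraMap_C]
    generalize algebraMap _ (RatFunc K) v.num = p at *
    generalize algebraMap _ (RatFunc K) v.denom = q at *
    field_simp at h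
    linear_combination h
  obtain ⟨hdenom, hnum, hc⟩ :=
    eq_one_and_eq_X_and_eq_zero_of_cubic_mul_eq hd v.monic_denom v.isCoprime_num_denom hcleared
  refine ⟨?_, hc⟩
  rw [← RatFunc.num_div_denom v, hnum, hdenom, map_one, div_one, RatFunc.algebraMap_X]

theorem ratFunc_map_C_eq_and_map_X_eq (σ : RatFunc K →+* RatFunc K) {y : K}
    (hy : IsAlgebraic K (σ (RatFunc.C y)))
    (hσ : σ (RatFunc.C y - (RatFunc.X - 1) ^ 3 / RatFunc.X) =
      RatFunc.C y - (RatFunc.X - 1) ^ 3 / RatFunc.X) :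
    σ (RatFunc.C y) = RatFunc.C y ∧ σ RatFunc.X = RatFunc.X := by
  obtain ⟨c, hc⟩ : ∃ c, σ (RatFunc.C y) = RatFunc.C c :=
    not_not.mp fun hne => RatFunc.transcendental_of_ne_C _ hne hy
  have hX : RatFunc.X ≠ (0 : RatFunc K) := RatFunc.X_ne_zero
  have hv : σ RatFunc.X ≠ 0 := (map_ne_zero σ).mpr hX
  have hpoles : σ RatFunc.X ^ 2 + RatFunc.C (-3) * σ RatFunc.X + RatFunc.C (-1) * (σ RatFunc.X)⁻¹ =
      RatFunc.X ^ 2 + RatFunc.C (-3) * RatFunc.X + RatFunc.C (-1) * RatFunc.X⁻¹ +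
        RatFunc.C (c - y) := by
    simp only [map_sub, map_div₀, map_pow, map_one, hc] at hσ
    simp only [map_sub, map_neg, map_one, map_ofNat]
    field_simp at hσ ⊢
    linear_combination -hσ
  obtain ⟨hσX, hcy⟩ := ratFunc_eq_X_and_const_eq_zero (neg_ne_zero.mpr one_ne_zero) hv hpoles
  exact ⟨by rw [hc, sub_eq_zero.mp hcy], hσX⟩

end RationalFunctions

section CubicExtension

open IntermediateField

variable {N E : Type*} [Field N] [Field E] [Algebra N E]

theorem exists_ratFunc_algEquiv {u : E} (hu : Transcendental N u) (hE : N⟮u⟯ = ⊤) :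
    ∃ e : RatFunc N ≃ₐ[N] E, e RatFunc.X = u :=
  ⟨(RatFunc.algEquivOfTranscendental u hu).trans ((equivOfEq hE).trans topEquiv),
    RatFunc.algEquivOfTranscendental_X u hu⟩

theorem transcendental_algebraMap_X [Algebra (RatFunc N) E] [IsScalarTower N (RatFunc N) E] :
    Transcendental N (algebraMap (RatFunc N) E RatFunc.X) :=
  (transcendental_algebraMap_iff (algebraMap (RatFunc N) E).injective).mpr RatFunc.transcendental_X

theorem adjoin_insert_algebraMap_X_eq_top [Algebra (RatFunc N) E] [IsScalarTower N (RatFunc N) E]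
    {s : Set E} (hs : adjoin (RatFunc N) s = ⊤) :
    adjoin N (insert (algebraMap (RatFunc N) E RatFunc.X) s) = ⊤ := by
  set F := adjoin N (insert (algebraMap (RatFunc N) E RatFunc.X) s)
  have hX : N⟮(RatFunc.X : RatFunc N)⟯ ≤ F.comap (IsScalarTower.toAlgHom N (RatFunc N) E) :=
    adjoin_simple_le_iff.mpr (subset_adjoin N _ (Set.mem_insert _ s))
  have hRatFunc : Set.range (algebraMap (RatFunc N) E) ⊆ F := by
    rintro _ ⟨r, rfl⟩
    have hr : r ∈ N⟮(RatFunc.X : RatFunc N)⟯ := by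
      rw [RatFunc.adjoin_X]
      exact mem_top
    exact hX hr
  have hle : (adjoin (RatFunc N) s).toSubfield ≤ F.toSubfield := by
    rw [adjoin_toSubfield, Subfield.closure_le]
    exact Set.union_subset hRatFunc ((Set.subset_insert _ s).trans (subset_adjoin N _))
  rw [hs] at hle
  exact eq_top_iff.mpr fun a _ => hle (mem_toSubfield _ a |>.mpr mem_top)

theorem adjoin_simple_gen_eq_top {F L : Type*} [Field F] [Field L] [Algebra F L] (a : L) :
    F⟮AdjoinSimple.gen F a⟯ = ⊤ :=
  lift_injective _ (by rw [lift_adjoin_simple, lift_top, AdjoinSimple.coe_gen])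

variable {y : N} {T x : E}

theorem add_one_ne_zero_of_root
    (hx : x ^ 3 + (T - algebraMap N E y) * x + (T - algebraMap N E y) = 0) : x + 1 ≠ 0 := by
  intro h
  obtain rfl : x = -1 := eq_neg_of_add_eq_zero_left h
  have : (-1 : E) = 0 := by linear_combination hx
  exact neg_ne_zero.mpr one_ne_zero this

theorem eq_sub_div_of_root
    (hx : x ^ 3 + (T - algebraMap N E y) * x + (T - algebraMap N E y) = 0) :
    T = algebraMap N E y - x ^ 3 / (x + 1) := by
  have := add_one_ne_zero_of_root hx
  field_simp
  linear_combination hx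

theorem transcendental_add_one_of_root (hT : Transcendental N T)
    (hx : x ^ 3 + (T - algebraMap N E y) * x + (T - algebraMap N E y) = 0) :
    Transcendental N (x + 1) := by
  intro hu
  have hx_alg : IsAlgebraic N x := by simpa using hu.sub isAlgebraic_one
  refine hT ?_
  rw [eq_sub_div_of_root hx, div_eq_mul_inv]
  exact (isAlgebraic_algebraMap y).sub ((hx_alg.pow 3).mul hu.inv)

theorem adjoin_add_one_eq_top_of_root (hE : adjoin N {T, x} = ⊤)
    (hx : x ^ 3 + (T - algebraMap N E y) * x + (T - algebraMap N E y) = 0) :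
    N⟮x + 1⟯ = ⊤ := by
  have hu : x + 1 ∈ N⟮x + 1⟯ := mem_adjoin_simple_self N _
  have hx_mem : x ∈ N⟮x + 1⟯ := by simpa using sub_mem hu (one_mem _)
  have hT_mem : T ∈ N⟮x + 1⟯ := by
    rw [eq_sub_div_of_root hx]
    exact sub_mem (IntermediateField.algebraMap_mem _ y) (div_mem (pow_mem hx_mem 3) hu)
  rw [eq_top_iff, ← hE, adjoin_le_iff]
  exact Set.pair_subset hT_mem hx_mem

theorem map_constant_eq_and_map_root_eq (hT : Transcendental N T)
    (hE : adjoin N {T, x} = ⊤)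
    (hx : x ^ 3 + (T - algebraMap N E y) * x + (T - algebraMap N E y) = 0)
    (σ : E →+* E) (hσT : σ T = T) (hσy : IsAlgebraic N (σ (algebraMap N E y))) :
    σ (algebraMap N E y) = algebraMap N E y ∧ σ x = x := by
  obtain ⟨e, he⟩ := exists_ratFunc_algEquiv (transcendental_add_one_of_root hT hx)
    (adjoin_add_one_eq_top_of_root hE hx)
  have hey : e (RatFunc.C y) = algebraMap N E y := e.commutes y
  have heT : e (RatFunc.C y - (RatFunc.X - 1) ^ 3 / RatFunc.X) = T := by
    rw [eq_sub_div_of_root hx]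
    simp only [map_sub, map_div₀, map_pow, map_one, he, hey, add_sub_cancel_right]
  let τ : RatFunc N →+* RatFunc N := (e.symm : E →+* RatFunc N).comp (σ.comp (e : RatFunc N →+* E))
  have hτ (r : RatFunc N) : τ r = e.symm (σ (e r)) := rfl
  obtain ⟨hτy, hτX⟩ := ratFunc_map_C_eq_and_map_X_eq (y := y) τ
    (by rw [hτ, hey]; exact hσy.algHom e.symm.toAlgHom)
    (by rw [hτ, heT, hσT, ← heT, e.symm_apply_apply])
  rw [hτ, e.symm_apply_eq, hey] at hτy
  rw [hτ, e.symm_apply_eq, he, map_add, map_one] at hτX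
  exact ⟨hτy, add_right_cancel hτX⟩

end CubicExtension

theorem ringHom_eq_of_adjoin_eq_top {K L E : Type*} [Field K] [Field L] [Field E] [Algebra K L]
    {s : Set L} (hs : IntermediateField.adjoin K s = ⊤) {f g : L →+* E}
    (hK : f.comp (algebraMap K L) = g.comp (algebraMap K L)) (hfg : Set.EqOn f g s) : f = g := by
  refine RingHom.eq_of_eqOn_of_field_closure_eq_top (congrArg IntermediateField.toSubfield hs) ?_
  rintro _ (⟨a, rfl⟩ | ha)
  · exact RingHom.congr_fun hK a
  · exact hfg ha

theorem closure_range_C_union_range_X_union {R ι K L : Type*} [CommRing R] [Field K] [Field L]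
    [Algebra (MvPolynomial ι R) K] [IsFractionRing (MvPolynomial ι R) K] (f : K →+* L)
    (s : Set L) :
    Subfield.closure (Set.range (f.comp ((algebraMap (MvPolynomial ι R) K).comp MvPolynomial.C)) ∪
        Set.range (fun i => f (algebraMap (MvPolynomial ι R) K (MvPolynomial.X i))) ∪ s) =
      Subfield.closure (Set.range f ∪ s) := by
  have hgen : f.fieldRange = Subfield.closure
      (Set.range (f.comp ((algebraMap (MvPolynomial ι R) K).comp MvPolynomial.C)) ∪
        Set.range (fun i => f (algebraMap (MvPolynomial ι R) K (MvPolynomial.X i)))) := by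
    refine IsFractionRing.ringHom_fieldRange_eq_of_comp_eq_of_range_eq
      (A := MvPolynomial ι R) rfl ?_
    rw [RingHom.range_eq_map, ← Algebra.top_toSubring (R := R), ← MvPolynomial.adjoin_range_X,
      Algebra.adjoin_eq_ring_closure, RingHom.map_closure, Set.image_union, ← Set.range_comp,
      ← Set.range_comp]
    rfl
  rw [Subfield.closure_union, ← hgen, Subfield.closure_union, ← RingHom.coe_fieldRange,
    Subfield.closure_eq]

theorem statement_12_general {K k₀ N E : Type*} [Field K] [Field k₀] [Field N] [Field E]
    [Algebra K k₀] [Algebra.IsAlgebraic K k₀] [Algebra N E] (i : k₀ →+* N) {y : k₀}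
    (hy : IntermediateField.adjoin K {y} = ⊤) {T x : E} (hT : Transcendental N T)
    (hE : IntermediateField.adjoin N {T, x} = ⊤)
    (hx : x ^ 3 + (T - algebraMap N E (i y)) * x + (T - algebraMap N E (i y)) = 0)
    (s : Set E) (σ : E →+* E) :
    (∀ a ∈ Subfield.closure
        (Set.range (((algebraMap N E).comp i).comp (algebraMap K k₀)) ∪ (s ∪ {T})), σ a = a) ↔
      (∀ a ∈ Subfield.closure (Set.range ((algebraMap N E).comp i) ∪ (s ∪ {T, x})), σ a = a) := by
  set f : k₀ →+* E := (algebraMap N E).comp i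
  constructor
  · intro h
    have hσT : σ T = T := h T (Subfield.subset_closure (.inr (.inr rfl)))
    have hσK : (σ.comp f).comp (algebraMap K k₀) = f.comp (algebraMap K k₀) :=
      RingHom.ext fun a => h _ (Subfield.subset_closure (.inl ⟨a, rfl⟩))
    have hσy_alg : IsAlgebraic N (σ (f y)) :=
      (Algebra.IsAlgebraic.isAlgebraic (R := K) y).ringHom_of_comp_eq
        (i.comp (algebraMap K k₀)) (σ.comp f) (RingHom.injective _) hσK.symm
    obtain ⟨hσy, hσx⟩ := map_constant_eq_and_map_root_eq hT hE hx σ hσT hσy_alg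
    have hσk₀ : σ.comp f = f :=
      ringHom_eq_of_adjoin_eq_top hy hσK (Set.eqOn_singleton.mpr hσy)
    refine RingHom.eqOn_field_closure (f := σ) (g := RingHom.id E) ?_
    rintro a (⟨b, rfl⟩ | ha | rfl | rfl)
    · exact RingHom.congr_fun hσk₀ b
    · exact h a (Subfield.subset_closure (.inr (.inl ha)))
    · exact hσT
    · exact hσx
  · intro h a ha
    refine h a (Subfield.closure_mono (Set.union_subset_union ?_ ?_) ha)
    · rintro _ ⟨b, rfl⟩
      exact ⟨algebraMap K k₀ b, rfl⟩
    · exact Set.union_subset_union_right s (Set.singleton_subset_iff.mpr (.inl rfl))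

/-- **Lemma `lem:sssecIII`.**  Let `k` be a field, `Y = (Y₁,…,Y_m)` indeterminates
(with `k(Y) = FractionRing (MvPolynomial (Fin m) k)`), and `k₀` a finite separable
extension of `k(Y)` with `k₀ = k(Y, y)` for some `y ∈ k₀`.  Let `Z` and `T` be further
indeterminates (`k₀(Z) = RatFunc k₀` with `Z = RatFunc.X`, and `N(T) = RatFunc N` with
`T = RatFunc.X`), let `N` be a finite Galois extension of `k₀(Z)`, let `x` be a root of
`P_y(T,X) = X³ + (T−y)X + (T−y)` in an algebraic closure of `N(T)`, and set
`E = N(T,x) = (N(T))(x)`.  Then `Aut(E/k(Z,Y,T)) = Gal(E/k₀(Z,T,x))`: a field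
automorphism `σ` of `E` fixes pointwise the subfield `k(Z,Y,T)` generated by (the images
in `E` of) `k`, `Z`, `Y₁,…,Y_m`, `T` if and only if it fixes pointwise the subfield
`k₀(Z,T,x)` generated by (the image of) `k₀`, `Z`, `T` and `x`. -/
theorem statement_12 (k : Type) [Field k] (m : ℕ)
    (k₀ : Type) [Field k₀]
    [Algebra (FractionRing (MvPolynomial (Fin m) k)) k₀]
    [FiniteDimensional (FractionRing (MvPolynomial (Fin m) k)) k₀]
    [Algebra.IsSeparable (FractionRing (MvPolynomial (Fin m) k)) k₀]
    (y : k₀)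
    (hy : IntermediateField.adjoin (FractionRing (MvPolynomial (Fin m) k))
      ({y} : Set k₀) = ⊤)
    (N : Type) [Field N] [Algebra (RatFunc k₀) N]
    [FiniteDimensional (RatFunc k₀) N] [IsGalois (RatFunc k₀) N]
    (x : AlgebraicClosure (RatFunc N))
    (hx : x ^ 3
        + (algebraMap (RatFunc N) (AlgebraicClosure (RatFunc N)) RatFunc.X
            - algebraMap (RatFunc N) (AlgebraicClosure (RatFunc N))
                (algebraMap N (RatFunc N) (algebraMap (RatFunc k₀) N
                  (algebraMap k₀ (RatFunc k₀) y)))) * x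
        + (algebraMap (RatFunc N) (AlgebraicClosure (RatFunc N)) RatFunc.X
            - algebraMap (RatFunc N) (AlgebraicClosure (RatFunc N))
                (algebraMap N (RatFunc N) (algebraMap (RatFunc k₀) N
                  (algebraMap k₀ (RatFunc k₀) y)))) = 0) :
    -- `E = N(T,x)`
    let E : IntermediateField (RatFunc N) (AlgebraicClosure (RatFunc N)) :=
      IntermediateField.adjoin (RatFunc N) ({x} : Set (AlgebraicClosure (RatFunc N)))
    -- the canonical copy of `k₀` inside `E`
    let f₀ : k₀ →+* E :=
      (algebraMap (RatFunc N) E).comp ((algebraMap N (RatFunc N)).comp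
        ((algebraMap (RatFunc k₀) N).comp (algebraMap k₀ (RatFunc k₀))))
    -- the canonical copy of `k` inside `E`
    let fk : k →+* E :=
      f₀.comp ((algebraMap (FractionRing (MvPolynomial (Fin m) k)) k₀).comp
        ((algebraMap (MvPolynomial (Fin m) k)
          (FractionRing (MvPolynomial (Fin m) k))).comp
          (algebraMap k (MvPolynomial (Fin m) k))))
    -- the images of `Y₁,…,Y_m` inside `E`
    let yE : Fin m → E := fun i =>
      f₀ (algebraMap (FractionRing (MvPolynomial (Fin m) k)) k₀
        (algebraMap (MvPolynomial (Fin m) k) (FractionRing (MvPolynomial (Fin m) k))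
          (MvPolynomial.X i)))
    -- the image of `Z` inside `E`
    let zE : E := algebraMap (RatFunc N) E
      (algebraMap N (RatFunc N) (algebraMap (RatFunc k₀) N RatFunc.X))
    -- the image of `T` inside `E`
    let tE : E := algebraMap (RatFunc N) E RatFunc.X
    -- the element `x` of `E`
    let xE : E := ⟨x, IntermediateField.subset_adjoin (RatFunc N) {x} rfl⟩
    ∀ σ : E ≃+* E,
      (∀ a ∈ Subfield.closure (Set.range fk ∪ Set.range yE ∪ {zE, tE}), σ a = a) ↔
      (∀ a ∈ Subfield.closure (Set.range f₀ ∪ {zE, tE, xE}), σ a = a) := by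
  intro E f₀ fk yE zE tE xE σ
  rw [show Subfield.closure (Set.range fk ∪ Set.range yE ∪ {zE, tE}) = _ from
    closure_range_C_union_range_X_union (f₀.comp (algebraMap _ k₀)) {zE, tE}]
  exact statement_12_general ((algebraMap (RatFunc k₀) N).comp (algebraMap k₀ (RatFunc k₀))) hy
    transcendental_algebraMap_X (adjoin_insert_algebraMap_X_eq_top (adjoin_simple_gen_eq_top x))
    (Subtype.ext hx) {zE} (σ : E →+* E)
end
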